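/- arXiv:2312.02639 — 3 statements merged into one kernel-verified Lean document; each statement's English description precedes it below -/
import Mathlib

section
/- Let G be a chordal graph. Then the dominance complex D(G) is homotopy equivalent to the sphere S^{τ(G)−1}. -/
open SimpleGraph

/-- An abstract simplicial complex on the underlying vertex set `V`. -/
structure Cplx (V : Type) where
  faces : Finset V → Prop
  down_closed : ∀ ⦃σ τ : Finset V⦄, σ ⊆ τ → faces τ → faces σ

/-- The dominance complex of a graph: the faces are the subsets of the vertex set
whose complement is a dominating set. -/
def domCpx {V : Type} [Fintype V] [DecidableEq V] (G : SimpleGraph V) : Cplx V where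
  faces σ := ∀ v : V, ∃ w : V, w ∉ σ ∧ (w = v ∨ G.Adj w v)
  down_closed := by
    intro σ τ hst h v
    obtain ⟨w, hw, h2⟩ := h v
    exact ⟨w, fun hc => hw (hst hc), h2⟩

open Classical in
/-- The geometric realization of a simplicial complex, as a subspace of `V → ℝ`. -/
def Cplx.space {V : Type} [Fintype V] (K : Cplx V) : Type :=
  {f : V → ℝ // (∑ v, f v = 1) ∧ (∀ v, 0 ≤ f v) ∧
    K.faces (Finset.univ.filter fun v => f v ≠ 0)}

instance {V : Type} [Fintype V] (K : Cplx V) : TopologicalSpace K.space :=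
  instTopologicalSpaceSubtype

/-- The vertex cover number of a graph: the least size of a set of vertices
meeting every edge. -/
noncomputable def vcNum {V : Type} [Fintype V] (G : SimpleGraph V) : ℕ :=
  sInf {k : ℕ | ∃ C : Finset V, (∀ ⦃u v : V⦄, G.Adj u v → u ∈ C ∨ v ∈ C) ∧ C.card = k}

/-- A graph is chordal if it contains no induced cycle of length at least 4. -/
def IsChordal {V : Type} (G : SimpleGraph V) : Prop :=
  ∀ n : ℕ, 4 ≤ n → IsEmpty (cycleGraph n ↪g G)

/-!
In a chordal graph, repeatedly choose a simplicial vertex `v` of the remaining induced subgraph and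
delete its closed neighbourhood, which is a clique. In that subgraph, every closed neighbourhood
containing `v` contains that of `v`, so as a nonface it is redundant, and moving mass to `v` deforms
the complex so that the remaining nonfaces avoid the deleted clique. Hence `D(G)` is homotopy
equivalent to the join of the boundaries of the simplices spanned by the deleted cliques. Modulo
functions constant on each clique, this join projects radially onto the unit sphere of a space of
dimension `|V| - #cliques`. The cliques partition `V` and the chosen vertices form an independent
set meeting each of them, which is therefore a maximum independent set, so `|V| - #cliques = τ(G)`.
-/

section Paths

variable {V : Type*} {G : SimpleGraph V} {u v : V}

lemma dist_getVert_of_length_eq_dist {w : G.Walk u v} (hw : w.length = G.dist u v) {i : ℕ}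
    (hi : i ≤ w.length) : G.dist u (w.getVert i) = i := by
  rw [← length_eq_dist_of_subwalk hw (w.isSubwalk_take i), Walk.take_length, min_eq_left hi]

lemma adj_getVert_iff_of_length_eq_dist {w : G.Walk u v} (hw : w.length = G.dist u v) {i j : ℕ}
    (hi : i ≤ w.length) (hj : j ≤ w.length) :
    G.Adj (w.getVert i) (w.getVert j) ↔ i + 1 = j ∨ j + 1 = i := by
  constructor
  · intro h
    have hij := h.reachable.dist_triangle_right u
    have hji := h.symm.reachable.dist_triangle_right u
    have hne : i ≠ j := fun hij => h.ne (congrArg w.getVert hij)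
    rw [dist_getVert_of_length_eq_dist hw hi, dist_getVert_of_length_eq_dist hw hj] at hij hji
    rw [dist_eq_one_iff_adj.2 h] at hij
    rw [dist_eq_one_iff_adj.2 h.symm] at hji
    omega
  · rintro (rfl | rfl)
    · exact w.adj_getVert_succ hj
    · exact (w.adj_getVert_succ hi).symm

lemma exists_pathGraph_embedding_of_reachable (h : G.Reachable u v) :
    ∃ p : pathGraph (G.dist u v + 1) ↪g G, p 0 = u ∧ p (Fin.last _) = v := by
  obtain ⟨w, hw⟩ := h.exists_walk_length_eq_dist
  rw [← hw]
  have hle (i : Fin (w.length + 1)) : i.val ≤ w.length := Nat.le_of_lt_succ i.isLt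
  have hinj : Function.Injective fun i : Fin (w.length + 1) => w.getVert i := fun i j hij =>
    Fin.ext (by
      rw [← dist_getVert_of_length_eq_dist hw (hle i), ← dist_getVert_of_length_eq_dist hw (hle j)]
      exact congrArg (G.dist u) hij)
  refine ⟨⟨⟨fun i => w.getVert i, hinj⟩, fun {i j} => ?_⟩, w.getVert_zero, w.getVert_length⟩
  rw [pathGraph_adj]
  exact adj_getVert_iff_of_length_eq_dist hw (hle i) (hle j)

lemma cycleGraph_adj_iff_val {n : ℕ} (i j : Fin (n + 2)) :
    (cycleGraph (n + 2)).Adj i j ↔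
      (i.val = j.val + 1 ∨ i.val = 0 ∧ j.val = n + 1) ∨
        (j.val = i.val + 1 ∨ j.val = 0 ∧ i.val = n + 1) := by
  have hsub (i j : Fin (n + 2)) :
      (i - j).val = 1 ↔ i.val = j.val + 1 ∨ i.val = 0 ∧ j.val = n + 1 := by
    rcases le_or_gt j i with h | h
    · rw [Fin.sub_val_of_le h]
      omega
    · rw [Fin.coe_sub_iff_lt.2 h]
      omega
  rw [cycleGraph_adj', hsub, hsub]

lemma cycleGraph_adj_castSucc_castSucc {n : ℕ} (i j : Fin (n + 1)) :
    (cycleGraph (n + 2)).Adj i.castSucc j.castSucc ↔ (pathGraph (n + 1)).Adj i j := by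
  rw [cycleGraph_adj_iff_val, pathGraph_adj, Fin.val_castSucc, Fin.val_castSucc]
  omega

lemma cycleGraph_adj_last_castSucc {n : ℕ} (i : Fin (n + 1)) :
    (cycleGraph (n + 2)).Adj (Fin.last _) i.castSucc ↔ i = 0 ∨ i = Fin.last n := by
  rw [cycleGraph_adj_iff_val, Fin.ext_iff, Fin.ext_iff, Fin.val_castSucc, Fin.val_last,
    Fin.val_last, Fin.val_zero]
  omega

lemma nonempty_cycleGraph_embedding {n : ℕ} (p : pathGraph (n + 1) ↪g G) {a : V}
    (ha : ∀ i, p i ≠ a) (hadj : ∀ i, G.Adj a (p i) ↔ i = 0 ∨ i = Fin.last n) :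
    Nonempty (cycleGraph (n + 2) ↪g G) := by
  let f : Fin (n + 2) → V := Fin.snoc p a
  have hcast (i : Fin (n + 1)) : f i.castSucc = p i := Fin.snoc_castSucc (α := fun _ => V) ..
  have hlast : f (Fin.last _) = a := Fin.snoc_last (α := fun _ => V) ..
  have hinj : Function.Injective f :=
    Fin.snoc_injective_of_injective p.injective (by simpa using ha)
  refine ⟨⟨⟨f, hinj⟩, fun {i j} => ?_⟩⟩
  change G.Adj (f i) (f j) ↔ _
  cases i using Fin.lastCases <;> cases j using Fin.lastCases
  · simp only [SimpleGraph.irrefl]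
  · rw [hlast, hcast, hadj, cycleGraph_adj_last_castSucc]
  · rw [hlast, hcast, G.adj_comm, hadj, adj_comm, cycleGraph_adj_last_castSucc]
  · rw [hcast, hcast, p.map_adj_iff, cycleGraph_adj_castSucc_castSucc]

end Paths

section Simplicial

variable {V : Type*} {G : SimpleGraph V}

open Classical in
/-- The closed neighbourhood of `v` inside the induced subgraph of `G` on `R`. -/
noncomputable def closedNbr (G : SimpleGraph V) (R : Finset V) (v : V) : Finset V :=
  R.filter fun w => w = v ∨ G.Adj w v

lemma mem_closedNbr {R : Finset V} {v w : V} :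
    w ∈ closedNbr G R v ↔ w ∈ R ∧ (w = v ∨ G.Adj w v) := by
  simp only [closedNbr, Finset.mem_filter]

lemma mem_closedNbr_self {R : Finset V} {v : V} (hv : v ∈ R) : v ∈ closedNbr G R v :=
  mem_closedNbr.2 ⟨hv, Or.inl rfl⟩

lemma closedNbr_subset {R : Finset V} {v : V} : closedNbr G R v ⊆ R := fun _ hw =>
  (mem_closedNbr.1 hw).1

lemma mem_closedNbr_comm {R : Finset V} {u v : V} (hu : u ∈ R)
    (h : v ∈ closedNbr G R u) : u ∈ closedNbr G R v :=
  mem_closedNbr.2 ⟨hu, (mem_closedNbr.1 h).2.imp Eq.symm Adj.symm⟩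

/-- `v` is a simplicial vertex of the induced subgraph of `G` on `R`: its closed neighbourhood
there is a clique. Such vertices are peeled off in `SimplicialPeeling`. -/
def IsSimplicialIn (G : SimpleGraph V) (R : Finset V) (v : V) : Prop :=
  v ∈ R ∧ G.IsClique (closedNbr G R v : Set V)

lemma IsSimplicialIn.closedNbr_subset_closedNbr {R : Finset V} {u v : V}
    (hv : IsSimplicialIn G R v) (hu : u ∈ closedNbr G R v) :
    closedNbr G R v ⊆ closedNbr G R u := fun x hx => by
  by_cases hxu : x = u
  · exact mem_closedNbr.2 ⟨(mem_closedNbr.1 hx).1, Or.inl hxu⟩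
  · exact mem_closedNbr.2 ⟨(mem_closedNbr.1 hx).1, Or.inr (hv.2 hx hu hxu)⟩

open Classical in
/-- The vertices of `R` outside `C` that have no neighbour in `C`, that is, those which `C` does not
dominate. -/
noncomputable def farFrom (G : SimpleGraph V) (R C : Finset V) : Finset V :=
  R.filter fun x => x ∉ C ∧ ∀ c ∈ C, ¬ G.Adj x c

lemma mem_farFrom {R C : Finset V} {x : V} :
    x ∈ farFrom G R C ↔ x ∈ R ∧ x ∉ C ∧ ∀ c ∈ C, ¬ G.Adj x c := by
  simp only [farFrom, Finset.mem_filter]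

/-- `C` is maximal among the connected subsets of `R` which do not dominate `R`. In a chordal graph
the neighbours of `C` are then a clique joined to all of `farFrom G R C`, which makes simplicial
vertices of `farFrom G R C` simplicial in `R`. -/
def IsMaximalNondominating (G : SimpleGraph V) (R C : Finset V) : Prop :=
  Maximal (fun C => C ⊆ R ∧ (G.induce (C : Set V)).Connected ∧ (farFrom G R C).Nonempty) C

lemma exists_isMaximalNondominating {R : Finset V} (hR : ¬ G.IsClique (R : Set V)) :
    ∃ C, IsMaximalNondominating G R C := by
  classical
  obtain ⟨a, ha, b, hb, hab, hnot⟩ :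
      ∃ a ∈ R, ∃ b ∈ R, a ≠ b ∧ ¬ G.Adj a b := by
    simpa [isClique_iff, Set.Pairwise] using hR
  have hfin : {C : Finset V | C ⊆ R ∧ (G.induce (C : Set V)).Connected ∧
      (farFrom G R C).Nonempty}.Finite :=
    R.powerset.finite_toSet.subset fun C hC => Finset.mem_powerset.2 hC.1
  have hsing : {a} ⊆ R ∧ (G.induce (({a} : Finset V) : Set V)).Connected ∧
      (farFrom G R {a}).Nonempty := by
    refine ⟨Finset.singleton_subset_iff.2 ha, ?_, b, mem_farFrom.2 ⟨hb, ?_, ?_⟩⟩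
    · rw [Finset.coe_singleton]
      exact Connected.of_subsingleton
    · exact fun h => hab (Finset.mem_singleton.1 h).symm
    · exact fun c hc hbc => hnot (Finset.mem_singleton.1 hc ▸ hbc.symm)
  exact hfin.exists_maximal ⟨_, hsing⟩

lemma connected_induce_insert {C : Set V} {s c : V} (hC : (G.induce C).Connected) (hc : c ∈ C)
    (h : G.Adj s c) : (G.induce (insert s C)).Connected := by
  rw [← Set.singleton_union]
  exact connected_induce_union (s := {s}) .of_subsingleton hC.preconnected rfl hc h

namespace IsMaximalNondominating

variable {R C : Finset V}

lemma adj_of_mem_farFrom (hC : IsMaximalNondominating G R C) {s c x : V} (hs : s ∈ R)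
    (hsC : s ∉ C) (hc : c ∈ C) (hsc : G.Adj s c) (hx : x ∈ farFrom G R C) : G.Adj s x := by
  classical
  by_contra hsx
  obtain ⟨hxR, hxC, hfar⟩ := mem_farFrom.1 hx
  refine hsC (hC.2 ⟨Finset.insert_subset hs hC.1.1, ?_, x, mem_farFrom.2 ⟨hxR, ?_, ?_⟩⟩
    (Finset.subset_insert s C) (Finset.mem_insert_self s C))
  · rw [Finset.coe_insert]
    exact connected_induce_insert hC.1.2.1 hc hsc
  · rw [Finset.mem_insert, not_or]
    exact ⟨fun h => hfar c hc (h ▸ hsc), hxC⟩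
  · rw [Finset.forall_mem_insert]
    exact ⟨fun h => hsx h.symm, hfar⟩

lemma farFrom_ssubset (hC : IsMaximalNondominating G R C) : farFrom G R C ⊂ R := by
  obtain ⟨c⟩ := hC.1.2.1.nonempty
  have hsub : farFrom G R C ⊆ R := fun _ hx => (mem_farFrom.1 hx).1
  exact (Finset.ssubset_iff_of_subset hsub).2 ⟨c, hC.1.1 c.2, fun h => (mem_farFrom.1 h).2.1 c.2⟩

end IsMaximalNondominating

end Simplicial

section Chordal

variable {V : Type} {G : SimpleGraph V}

lemma IsChordal.adj_of_preconnected (hch : IsChordal G) {A : Set V}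
    (hA : (G.induce A).Preconnected) {a s t : V} (ha : a ∉ A) (hs : s ∈ A) (ht : t ∈ A)
    (hst : s ≠ t) (hadj : ∀ x ∈ A, G.Adj a x ↔ x = s ∨ x = t) : G.Adj s t := by
  by_contra hnot
  let s' : A := ⟨s, hs⟩
  let t' : A := ⟨t, ht⟩
  obtain ⟨p, hp0, hplast⟩ := exists_pathGraph_embedding_of_reachable (hA s' t')
  have hdist : 2 ≤ (G.induce A).dist s' t' := by
    have hne : s' ≠ t' := fun h => hst (congrArg Subtype.val h)
    have hpos := (hA s' t').pos_dist_of_ne hne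
    have hne_one : (G.induce A).dist s' t' ≠ 1 := fun h =>
      hnot (show (G.induce A).Adj s' t' from dist_eq_one_iff_adj.1 h)
    omega
  obtain ⟨c⟩ := nonempty_cycleGraph_embedding (p.trans (Embedding.induce A)) (a := a)
    (fun i h => ha (h ▸ (p i).2)) fun i => by
      rw [← p.injective.eq_iff, ← p.injective.eq_iff (b := Fin.last _), hp0, hplast,
        Subtype.ext_iff, Subtype.ext_iff]
      exact hadj _ (p i).2
  exact (hch _ (by omega)).false c

namespace IsMaximalNondominating

variable {R C : Finset V}

lemma adj_of_adj_mem_farFrom (hC : IsMaximalNondominating G R C) (hch : IsChordal G)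
    {s t c d x : V} (hs : s ∈ R) (ht : t ∈ R) (hsC : s ∉ C) (htC : t ∉ C) (hc : c ∈ C)
    (hd : d ∈ C) (hsc : G.Adj s c) (htd : G.Adj t d) (hst : s ≠ t) (hx : x ∈ farFrom G R C) :
    G.Adj s t := by
  have hxs := hC.adj_of_mem_farFrom hs hsC hc hsc hx
  have hxt := hC.adj_of_mem_farFrom ht htC hd htd hx
  obtain ⟨-, hxC, hfar⟩ := mem_farFrom.1 hx
  have hconn : (G.induce (insert t (insert s (C : Set V)))).Connected :=
    connected_induce_insert (connected_induce_insert hC.1.2.1 hc hsc) (Or.inr hd) htd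
  refine hch.adj_of_preconnected hconn.preconnected (a := x) ?_ (by simp) (by simp) hst ?_
  · rintro (rfl | rfl | h)
    exacts [hxt.ne rfl, hxs.ne rfl, hxC h]
  · rintro y (rfl | rfl | hy)
    · exact iff_of_true hxt.symm (Or.inr rfl)
    · exact iff_of_true hxs.symm (Or.inl rfl)
    · exact iff_of_false (hfar y hy) (by rintro (rfl | rfl) <;> contradiction)

lemma isSimplicialIn (hC : IsMaximalNondominating G R C) (hch : IsChordal G) {x : V}
    (hx : IsSimplicialIn G (farFrom G R C) x) : IsSimplicialIn G R x := by
  obtain ⟨hxR, hxC, hfar⟩ := mem_farFrom.1 hx.1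
  have hcases {y : V} (hy : y ∈ closedNbr G R x) :
      y ∈ closedNbr G (farFrom G R C) x ∨ y ∈ R ∧ y ∉ C ∧ ∃ c ∈ C, G.Adj y c := by
    obtain ⟨hyR, hyx⟩ := mem_closedNbr.1 hy
    have hyC : y ∉ C := by
      rintro hyC
      rcases hyx with rfl | h
      exacts [hxC hyC, hfar y hyC h.symm]
    by_cases h : ∃ c ∈ C, G.Adj y c
    · exact Or.inr ⟨hyR, hyC, h⟩
    · push Not at h
      exact Or.inl (mem_closedNbr.2 ⟨mem_farFrom.2 ⟨hyR, hyC, h⟩, hyx⟩)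
  refine ⟨hxR, fun y hy z hz hyz => ?_⟩
  rcases hcases hy with hyD | ⟨hyR, hyC, c, hc, hyc⟩ <;>
    rcases hcases hz with hzD | ⟨hzR, hzC, d, hd, hzd⟩
  · exact hx.2 hyD hzD hyz
  · exact (hC.adj_of_mem_farFrom hzR hzC hd hzd (closedNbr_subset hyD)).symm
  · exact hC.adj_of_mem_farFrom hyR hyC hc hyc (closedNbr_subset hzD)
  · exact hC.adj_of_adj_mem_farFrom hch hyR hzR hyC hzC hc hd hyc hzd hyz hx.1

end IsMaximalNondominating

theorem IsChordal.exists_isSimplicialIn (hch : IsChordal G) {R : Finset V} (hR : R.Nonempty) :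
    ∃ v, IsSimplicialIn G R v := by
  induction R using Finset.strongInduction with
  | H R ih =>
    by_cases hclique : G.IsClique (R : Set V)
    · obtain ⟨v, hv⟩ := hR
      exact ⟨v, hv, hclique.subset closedNbr_subset⟩
    · obtain ⟨C, hC⟩ := exists_isMaximalNondominating hclique
      obtain ⟨x, hx⟩ := ih _ hC.farFrom_ssubset hC.1.2.2
      exact ⟨x, hC.isSimplicialIn hch hx⟩

end Chordal

section Peeling

variable {V : Type*} [DecidableEq V] {G : SimpleGraph V} {R : Finset V} {𝓟 : Finset (Finset V)}

/-- The induced subgraph of `G` on `R` can be exhausted by repeatedly removing the closed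
neighbourhood of a simplicial vertex, and `𝓟` is the set of closed neighbourhoods removed. -/
inductive SimplicialPeeling (G : SimpleGraph V) : Finset V → Finset (Finset V) → Prop
  | empty : SimplicialPeeling G ∅ ∅
  | peel {R : Finset V} {𝓟 : Finset (Finset V)} {v : V} (hv : IsSimplicialIn G R v)
      (h : SimplicialPeeling G (R \ closedNbr G R v) 𝓟) :
      SimplicialPeeling G R (insert (closedNbr G R v) 𝓟)

lemma IsChordal.exists_simplicialPeeling {V : Type} [DecidableEq V] {G : SimpleGraph V}
    (hch : IsChordal G) (R : Finset V) :
    ∃ 𝓟, SimplicialPeeling G R 𝓟 := by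
  induction R using Finset.strongInduction with
  | H R ih =>
    rcases R.eq_empty_or_nonempty with rfl | hR
    · exact ⟨∅, .empty⟩
    · obtain ⟨v, hv⟩ := hch.exists_isSimplicialIn hR
      obtain ⟨𝓟, h⟩ := ih _ (Finset.sdiff_ssubset closedNbr_subset ⟨v, mem_closedNbr_self hv.1⟩)
      exact ⟨_, .peel hv h⟩

namespace SimplicialPeeling

lemma exists_finpartition (h : SimplicialPeeling G R 𝓟) : ∃ P : Finpartition R, P.parts = 𝓟 := by
  induction h with
  | empty => exact ⟨.empty _, rfl⟩
  | @peel R 𝓟 v hv _ ih =>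
    obtain ⟨P, rfl⟩ := ih
    refine ⟨P.extend (Finset.nonempty_iff_ne_empty.1 ⟨v, mem_closedNbr_self hv.1⟩)
      Finset.sdiff_disjoint (Finset.sdiff_union_of_subset closedNbr_subset), rfl⟩

lemma isClique (h : SimplicialPeeling G R 𝓟) {P : Finset V} (hP : P ∈ 𝓟) :
    G.IsClique (P : Set V) := by
  induction h with
  | empty => exact absurd hP (Finset.notMem_empty P)
  | peel hv _ ih =>
    rcases Finset.mem_insert.1 hP with rfl | hP
    exacts [hv.2, ih hP]

lemma exists_isIndepSet (h : SimplicialPeeling G R 𝓟) :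
    ∃ I ⊆ R, G.IsIndepSet (I : Set V) ∧ I.card = 𝓟.card := by
  induction h with
  | empty => exact ⟨∅, subset_rfl, by simp, rfl⟩
  | @peel R 𝓟 v hv h ih =>
    obtain ⟨I, hIR, hI, hcard⟩ := ih
    have hnot {x : V} (hx : x ∈ I) : x ∉ closedNbr G R v := (Finset.mem_sdiff.1 (hIR hx)).2
    have hvI : v ∉ I := fun hvI => hnot hvI (mem_closedNbr_self hv.1)
    have hnotMem : closedNbr G R v ∉ 𝓟 := by
      obtain ⟨P, rfl⟩ := h.exists_finpartition
      exact fun hmem => (Finset.mem_sdiff.1 (P.le hmem (mem_closedNbr_self hv.1))).2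
        (mem_closedNbr_self hv.1)
    refine ⟨insert v I, Finset.insert_subset hv.1 (hIR.trans Finset.sdiff_subset), ?_, ?_⟩
    · have hnotAdj {x : V} (hx : x ∈ I) : ¬ G.Adj x v := fun hxv =>
        hnot hx (mem_closedNbr.2 ⟨(Finset.mem_sdiff.1 (hIR hx)).1, Or.inr hxv⟩)
      rw [Finset.coe_insert]
      exact hI.insert fun x hx _ => ⟨fun hvx => hnotAdj hx hvx.symm, hnotAdj hx⟩
    · rw [Finset.card_insert_of_notMem hvI, Finset.card_insert_of_notMem hnotMem, hcard]

end SimplicialPeeling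

lemma card_le_card_parts_of_isIndepSet {P : Finpartition R}
    (hP : ∀ B ∈ P.parts, G.IsClique (B : Set V)) {I : Finset V} (hIR : I ⊆ R)
    (hI : G.IsIndepSet (I : Set V)) : I.card ≤ P.parts.card := by
  refine Finset.card_le_card_of_injOn P.part (fun x hx => P.part_mem.2 (hIR hx))
    fun x hx y hy hxy => ?_
  by_contra hne
  exact hI hx hy hne (hP _ (P.part_mem.2 (hIR hx)) (P.mem_part_self.2 (hIR hx))
    (hxy ▸ P.mem_part_self.2 (hIR hy)) hne)

lemma SimplicialPeeling.card_sub_card_eq_vcNum {V : Type} [Fintype V] [DecidableEq V]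
    {G : SimpleGraph V} {𝓟 : Finset (Finset V)} (h : SimplicialPeeling G Finset.univ 𝓟) :
    Fintype.card V - 𝓟.card = vcNum G := by
  obtain ⟨I, -, hI, hcard⟩ := h.exists_isIndepSet
  obtain ⟨P, rfl⟩ := h.exists_finpartition
  have hcover : ∀ ⦃u v : V⦄, G.Adj u v → u ∈ Iᶜ ∨ v ∈ Iᶜ := fun u v huv => by
    by_contra! hmem
    rw [Finset.mem_compl, Finset.mem_compl, not_not, not_not] at hmem
    exact hI hmem.1 hmem.2 huv.ne huv
  apply le_antisymm
  · refine le_csInf ⟨_, Iᶜ, hcover, rfl⟩ ?_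
    rintro _ ⟨C, hC, rfl⟩
    have hindep : G.IsIndepSet ((Cᶜ : Finset V) : Set V) := fun u hu v hv _ huv => by
      rw [Finset.mem_coe, Finset.mem_compl] at hu hv
      exact (hC huv).elim hu hv
    have hle := card_le_card_parts_of_isIndepSet (fun B hB => h.isClique hB)
      (Finset.subset_univ _) hindep
    rw [Finset.card_compl] at hle
    omega
  · rw [← hcard, ← Finset.card_compl]
    exact Nat.sInf_le ⟨_, hcover, rfl⟩

end Peeling

lemma Cplx.ext_faces {V : Type} {K L : Cplx V} (h : ∀ σ, K.faces σ ↔ L.faces σ) : K = L := by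
  cases K
  cases L
  congr
  exact funext fun σ => propext (h σ)

section CoordSupport

variable {V : Type*} [Fintype V]

open Classical in
/-- The vertices with nonzero barycentric coordinate; this is the set which has to be a face in
`Cplx.space`. -/
noncomputable def coordSupport (f : V → ℝ) : Finset V := Finset.univ.filter fun v => f v ≠ 0

lemma mem_coordSupport {f : V → ℝ} {v : V} : v ∈ coordSupport f ↔ f v ≠ 0 := by
  simp only [coordSupport, Finset.mem_filter, Finset.mem_univ, true_and]

lemma coordSupport_add_subset [DecidableEq V] (a b : ℝ) (f g : V → ℝ) :
    coordSupport (a • f + b • g) ⊆ coordSupport f ∪ coordSupport g := by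
  intro x hx
  rw [Finset.mem_union, mem_coordSupport, mem_coordSupport]
  by_contra! h
  exact mem_coordSupport.1 hx (by simp [h.1, h.2])

end CoordSupport

section Realization

variable {V : Type} [Fintype V] {K L : Cplx V}

lemma homotopic_of_faces_union [DecidableEq V] {X : Type*} [TopologicalSpace X]
    {a b : C(X, K.space)}
    (h : ∀ x, K.faces (coordSupport (a x).1 ∪ coordSupport (b x).1)) : a.Homotopic b := by
  have hline (t : unitInterval) (x : X) :
      let f := (1 - t : ℝ) • (a x).1 + (t : ℝ) • (b x).1
      ∑ v, f v = 1 ∧ (∀ v, 0 ≤ f v) ∧ K.faces (coordSupport f) := by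
    refine ⟨?_, fun v => ?_, K.down_closed (coordSupport_add_subset _ _ _ _) (h x)⟩
    · simp only [Pi.add_apply, Pi.smul_apply, smul_eq_mul, Finset.sum_add_distrib,
        ← Finset.mul_sum, (a x).2.1, (b x).2.1]
      ring
    · exact add_nonneg (mul_nonneg (sub_nonneg.2 t.2.2) ((a x).2.2.1 v))
        (mul_nonneg t.2.1 ((b x).2.2.1 v))
  have : Continuous fun f : K.space => f.1 := continuous_subtype_val
  refine ⟨⟨⟨fun p => ⟨_, hline p.1 p.2⟩, Continuous.subtype_mk ?_ _⟩, fun x => ?_, fun x => ?_⟩⟩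
  · fun_prop
  · exact Subtype.ext (by simp)
  · exact Subtype.ext (by simp)

/-- The inclusion of the realization of a subcomplex. -/
def Cplx.inclusion (h : ∀ σ, L.faces σ → K.faces σ) : C(L.space, K.space) where
  toFun f := ⟨f.1, f.2.1, f.2.2.1, h _ f.2.2.2⟩
  continuous_toFun := Continuous.subtype_mk continuous_subtype_val _

lemma nonempty_homotopyEquiv_of_retraction [DecidableEq V] (h : ∀ σ, L.faces σ → K.faces σ)
    (r : C(K.space, L.space)) (hr : ∀ f, r (Cplx.inclusion h f) = f)
    (hface : ∀ f, K.faces (coordSupport (r f).1 ∪ coordSupport f.1)) :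
    Nonempty (ContinuousMap.HomotopyEquiv K.space L.space) :=
  ⟨r, Cplx.inclusion h, homotopic_of_faces_union hface, by
    rw [show r.comp (Cplx.inclusion h) = ContinuousMap.id _ from ContinuousMap.ext hr]⟩

end Realization

section Excess

variable {V : Type*}

/-- The minimum of `f` on `T`, with the junk value `0` if `T` is empty. -/
noncomputable def minCoord (T : Finset V) (f : V → ℝ) : ℝ := ⨅ x : T, f x

variable {T : Finset V} {f : V → ℝ}

lemma minCoord_le {x : V} (hx : x ∈ T) : minCoord T f ≤ f x :=
  ciInf_le (Set.finite_range _).bddBelow (⟨x, hx⟩ : T)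

lemma minCoord_nonneg (hf : ∀ x, 0 ≤ f x) : 0 ≤ minCoord T f :=
  Real.iInf_nonneg fun x => hf x

lemma exists_eq_minCoord (hT : T.Nonempty) (f : V → ℝ) : ∃ x ∈ T, f x = minCoord T f := by
  have := hT.to_subtype
  obtain ⟨x, hx⟩ := exists_eq_ciInf_of_finite (f := fun x : T => f x)
  exact ⟨x, x.2, hx⟩

lemma continuous_minCoord (hT : T.Nonempty) : Continuous (minCoord T) := by
  have := hT.to_subtype
  refine Continuous.congr ?_ fun f => Finset.inf'_univ_eq_ciInf fun x : T => f x
  exact Continuous.finset_inf'_apply _ fun x _ => continuous_apply x.1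

/-- For `f ≥ 0`, a threshold which vanishes precisely when no member of `𝓣` lies in the support of
`f`, and at or below which every member of `𝓣` has a coordinate. -/
noncomputable def excess (𝓣 : Finset (Finset V)) (f : V → ℝ) : ℝ := ∑ T ∈ 𝓣, minCoord T f

variable {𝓣 : Finset (Finset V)}

lemma excess_nonneg (hf : ∀ x, 0 ≤ f x) : 0 ≤ excess 𝓣 f :=
  Finset.sum_nonneg fun _ _ => minCoord_nonneg hf

lemma exists_le_excess (hf : ∀ x, 0 ≤ f x) (hT : T ∈ 𝓣) (hne : T.Nonempty) :
    ∃ x ∈ T, f x ≤ excess 𝓣 f := by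
  obtain ⟨x, hx, hmin⟩ := exists_eq_minCoord hne f
  refine ⟨x, hx, hmin.trans_le ?_⟩
  exact Finset.single_le_sum (f := fun T => minCoord T f) (fun _ _ => minCoord_nonneg hf) hT

lemma excess_eq_zero [Fintype V] (hf : ∀ x, 0 ≤ f x) (h : ∀ T ∈ 𝓣, ¬ T ⊆ coordSupport f) :
    excess 𝓣 f = 0 := by
  refine Finset.sum_eq_zero fun T hT => le_antisymm ?_ (minCoord_nonneg hf)
  obtain ⟨x, hx, hx'⟩ := Finset.not_subset.1 (h T hT)
  rw [mem_coordSupport, not_not] at hx'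
  exact hx' ▸ minCoord_le hx

lemma continuous_excess (h𝓣 : ∀ T ∈ 𝓣, T.Nonempty) : Continuous (excess 𝓣) :=
  continuous_finsetSum _ fun T hT => continuous_minCoord (h𝓣 T hT)

end Excess

section PushTo

variable {V : Type*} [Fintype V] [DecidableEq V]

/-- Truncated subtraction of `t` from the coordinates other than `v`; the coordinate at `v` is
chosen so that the total is `1`. -/
noncomputable def pushTo (v : V) (t : ℝ) (f : V → ℝ) (x : V) : ℝ :=
  if x = v then 1 - ∑ y ∈ Finset.univ.erase v, max (f y - t) 0 else max (f x - t) 0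

variable {v x : V} {t : ℝ} {f : V → ℝ}

lemma pushTo_self : pushTo v t f v = 1 - ∑ y ∈ Finset.univ.erase v, max (f y - t) 0 :=
  if_pos rfl

lemma pushTo_of_ne (hx : x ≠ v) : pushTo v t f x = max (f x - t) 0 := if_neg hx

lemma continuous_pushTo {X : Type*} [TopologicalSpace X] {t : X → ℝ} {f : X → V → ℝ}
    (ht : Continuous t) (hf : Continuous f) : Continuous fun x => pushTo v (t x) (f x) := by
  refine continuous_pi fun y => ?_
  unfold pushTo
  split_ifs <;> fun_prop

lemma sum_pushTo : ∑ x, pushTo v t f x = 1 := by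
  rw [← Finset.add_sum_erase _ _ (Finset.mem_univ v), pushTo_self,
    Finset.sum_congr rfl fun x hx => pushTo_of_ne (Finset.ne_of_mem_erase hx), sub_add_cancel]

lemma pushTo_nonneg (ht : 0 ≤ t) (hf : ∀ x, 0 ≤ f x) (hsum : ∑ x, f x = 1) (x : V) :
    0 ≤ pushTo v t f x := by
  by_cases hx : x = v
  · have hle : ∑ y ∈ Finset.univ.erase v, max (f y - t) 0 ≤ ∑ y ∈ Finset.univ.erase v, f y :=
      Finset.sum_le_sum fun y _ => max_le (sub_le_self _ ht) (hf y)
    have hsplit := Finset.add_sum_erase Finset.univ f (Finset.mem_univ v)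
    rw [hx, pushTo_self]
    linarith [hf v]
  · rw [pushTo_of_ne hx]
    exact le_max_right _ _

lemma pushTo_zero (hf : ∀ x, 0 ≤ f x) (hsum : ∑ x, f x = 1) : pushTo v 0 f = f := by
  funext x
  by_cases hx : x = v
  · simp only [hx, pushTo_self, sub_zero, max_eq_left (hf _)]
    rw [← hsum, ← Finset.add_sum_erase Finset.univ f (Finset.mem_univ v), add_sub_cancel_right]
  · rw [pushTo_of_ne hx, sub_zero, max_eq_left (hf x)]

lemma pushTo_eq_zero_of_le (hx : x ≠ v) (h : f x ≤ t) : pushTo v t f x = 0 := by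
  rw [pushTo_of_ne hx, max_eq_right (sub_nonpos.2 h)]

lemma coordSupport_pushTo_subset (ht : 0 ≤ t) :
    coordSupport (pushTo v t f) ⊆ insert v (coordSupport f) := by
  intro x hx
  rw [Finset.mem_insert, mem_coordSupport]
  by_contra! h
  exact mem_coordSupport.1 hx (pushTo_eq_zero_of_le h.1 (h.2.trans_le ht))

end PushTo

/-- Realizes at once the collapses along the acyclic matching `σ ↔ insert v σ`. -/
theorem nonempty_homotopyEquiv_of_matching {V : Type} [Fintype V] [DecidableEq V]
    {K L : Cplx V} {𝓣 : Finset (Finset V)} {v : V}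
    (hne : ∀ T ∈ 𝓣, T.Nonempty) (hv : ∀ T ∈ 𝓣, v ∉ T)
    (hL : ∀ σ, L.faces σ ↔ K.faces σ ∧ ∀ T ∈ 𝓣, ¬ T ⊆ σ)
    (hK : ∀ σ, K.faces σ → ∀ T ∈ 𝓣, T ⊆ σ → K.faces (insert v σ)) :
    Nonempty (ContinuousMap.HomotopyEquiv K.space L.space) := by
  let push (f : K.space) : V → ℝ := pushTo v (excess 𝓣 f.1) f.1
  have hpush {f : V → ℝ} (hf : ∀ x, 0 ≤ f x) (hsum : ∑ x, f x = 1)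
      (h : ∀ T ∈ 𝓣, ¬ T ⊆ coordSupport f) : pushTo v (excess 𝓣 f) f = f := by
    rw [excess_eq_zero hf h, pushTo_zero hf hsum]
  have hcarrier (f : K.space) : K.faces (coordSupport (push f) ∪ coordSupport f.1) := by
    by_cases h : ∀ T ∈ 𝓣, ¬ T ⊆ coordSupport f.1
    · rw [show push f = f.1 from hpush f.2.2.1 f.2.1 h, Finset.union_self]
      exact f.2.2.2
    · push Not at h
      obtain ⟨T, hT, hTf⟩ := h
      exact K.down_closed (Finset.union_subset
        (coordSupport_pushTo_subset (excess_nonneg f.2.2.1)) (Finset.subset_insert _ _))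
        (hK _ f.2.2.2 T hT hTf)
  have hface (f : K.space) : L.faces (coordSupport (push f)) := by
    refine (hL _).2 ⟨K.down_closed Finset.subset_union_left (hcarrier f), fun T hT hTf => ?_⟩
    obtain ⟨x, hx, hle⟩ := exists_le_excess f.2.2.1 hT (hne T hT)
    have hxv : x ≠ v := fun h => hv T hT (h ▸ hx)
    exact mem_coordSupport.1 (hTf hx) (pushTo_eq_zero_of_le hxv hle)
  have hcont : Continuous push :=
    continuous_pushTo ((continuous_excess hne).comp continuous_subtype_val) continuous_subtype_val
  let r : C(K.space, L.space) :=
    ⟨fun f => ⟨push f, sum_pushTo, pushTo_nonneg (excess_nonneg f.2.2.1) f.2.2.1 f.2.1, hface f⟩,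
      hcont.subtype_mk _⟩
  exact nonempty_homotopyEquiv_of_retraction (fun σ hσ => ((hL σ).1 hσ).1) r
    (fun f => Subtype.ext (hpush f.2.2.1 f.2.1 ((hL _).1 f.2.2.2).2)) hcarrier

section Hypergraph

variable {V : Type}

/-- The complex whose nonfaces are the sets containing a member of `𝓗`. For disjoint nonempty
members covering `V` it is the join of the boundaries of the simplices spanned by them. -/
def Cplx.avoiding (𝓗 : Finset (Finset V)) : Cplx V where
  faces σ := ∀ H ∈ 𝓗, ¬ H ⊆ σ
  down_closed _ _ hστ h H hH hHσ := h H hH (hHσ.trans hστ)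

variable [Fintype V] [DecidableEq V]

/-- For `H ∈ 𝓗` with `v ∉ H`, a face containing `H \ P` misses a vertex of `P` other than `v`, so
inserting `v` into it creates no nonface. -/
theorem nonempty_homotopyEquiv_avoiding_sdiff {𝓗 : Finset (Finset V)} {P : Finset V} {v : V}
    (hP : P ∈ 𝓗) (hv : v ∈ P) (hmem : ∀ H ∈ 𝓗, v ∈ H → P ⊆ H)
    (hnotMem : ∀ H ∈ 𝓗, v ∉ H → ¬ H ⊆ P) :
    Nonempty (ContinuousMap.HomotopyEquiv (Cplx.avoiding 𝓗).space
      (Cplx.avoiding (insert P ((𝓗.filter (v ∉ ·)).image (· \ P)))).space) := by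
  apply nonempty_homotopyEquiv_of_matching (𝓣 := (𝓗.filter (v ∉ ·)).image (· \ P)) (v := v) <;>
    simp only [Cplx.avoiding, Finset.forall_mem_insert, Finset.forall_mem_image,
      Finset.mem_filter, and_imp]
  · exact fun H hH hvH => Finset.sdiff_nonempty.2 (hnotMem H hH hvH)
  · exact fun H _ _ hvH => (Finset.mem_sdiff.1 hvH).2 hv
  · refine fun σ => and_congr_left fun hσ => ⟨fun hPσ H hH hHσ => ?_, fun h => h P hP⟩
    by_cases hvH : v ∈ H
    · exact hPσ ((hmem H hH hvH).trans hHσ)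
    · exact hσ hH hvH (Finset.sdiff_subset.trans hHσ)
  · intro σ hσ H hH hvH hHσ H' hH' hH'σ
    by_cases hvH' : v ∈ H'
    · refine hσ H hH ((Finset.subset_insert_iff_of_notMem hvH).1 fun x hx => ?_)
      by_cases hxP : x ∈ P
      · exact hH'σ (hmem H' hH' hvH' hxP)
      · exact Finset.mem_insert_of_mem (hHσ (Finset.mem_sdiff.2 ⟨hx, hxP⟩))
    · exact hσ H' hH' ((Finset.subset_insert_iff_of_notMem hvH').1 hH'σ)

end Hypergraph

section Dominance

variable {V : Type} [DecidableEq V] {G : SimpleGraph V} {R : Finset V} {v : V}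
  {𝓟 𝓠 : Finset (Finset V)}

lemma closedNbr_sdiff (G : SimpleGraph V) (R P : Finset V) (u : V) :
    closedNbr G (R \ P) u = closedNbr G R u \ P := by
  ext x
  simp only [mem_closedNbr, Finset.mem_sdiff]
  tauto

lemma image_sdiff_filter_notMem_closedNbr (h𝓠 : ∀ Q ∈ 𝓠, Disjoint Q R) (hv : v ∈ R) :
    insert (closedNbr G R v)
        (((𝓠 ∪ R.image (closedNbr G R)).filter (v ∉ ·)).image (· \ closedNbr G R v)) =
      insert (closedNbr G R v) 𝓠 ∪
        (R \ closedNbr G R v).image (closedNbr G (R \ closedNbr G R v)) := by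
  have h𝓠_filter : (𝓠.filter (v ∉ ·)).image (· \ closedNbr G R v) = 𝓠 := by
    have hvQ : ∀ Q ∈ 𝓠, v ∉ Q := fun Q hQ hvQ => Finset.disjoint_left.1 (h𝓠 Q hQ) hvQ hv
    rw [Finset.filter_true_of_mem hvQ]
    refine (Finset.image_congr fun Q hQ => ?_).trans Finset.image_id
    exact Finset.sdiff_eq_self_of_disjoint ((h𝓠 Q hQ).mono_right closedNbr_subset)
  have hR_filter : R.filter (fun u => v ∉ closedNbr G R u) = R \ closedNbr G R v := by
    ext u
    rw [Finset.mem_filter, Finset.mem_sdiff]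
    exact and_congr_right fun hu =>
      not_congr ⟨mem_closedNbr_comm hu, mem_closedNbr_comm hv⟩
  rw [Finset.filter_union, Finset.image_union, h𝓠_filter, Finset.filter_image, hR_filter,
    Finset.image_image, Finset.insert_union, funext (closedNbr_sdiff G R _)]
  rfl

lemma IsSimplicialIn.nonempty_homotopyEquiv_avoiding [Fintype V] (hv : IsSimplicialIn G R v)
    (hdisj : ∀ Q ∈ 𝓠, Disjoint Q R) (hne : ∀ Q ∈ 𝓠, Q.Nonempty) :
    Nonempty (ContinuousMap.HomotopyEquiv
      (Cplx.avoiding (𝓠 ∪ R.image (closedNbr G R))).space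
      (Cplx.avoiding (insert (closedNbr G R v) 𝓠 ∪
        (R \ closedNbr G R v).image (closedNbr G (R \ closedNbr G R v)))).space) := by
  have hmem_self := mem_closedNbr_self (G := G) hv.1
  rw [← image_sdiff_filter_notMem_closedNbr hdisj hv.1]
  refine nonempty_homotopyEquiv_avoiding_sdiff
    (Finset.mem_union_right _ (Finset.mem_image_of_mem _ hv.1)) hmem_self (fun H hH hvH => ?_)
    fun H hH hvH hsub => ?_
  all_goals rcases Finset.mem_union.1 hH with hQ | hN
  · exact absurd hv.1 (Finset.disjoint_left.1 (hdisj H hQ) hvH)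
  · obtain ⟨u, hu, rfl⟩ := Finset.mem_image.1 hN
    exact hv.closedNbr_subset_closedNbr (mem_closedNbr_comm hu hvH)
  · obtain ⟨x, hx⟩ := hne H hQ
    exact Finset.disjoint_left.1 (hdisj H hQ) hx (closedNbr_subset (hsub hx))
  · obtain ⟨u, hu, rfl⟩ := Finset.mem_image.1 hN
    exact hvH (mem_closedNbr_comm hv.1 (hsub (mem_closedNbr_self hu)))

lemma SimplicialPeeling.nonempty_homotopyEquiv_avoiding_union [Fintype V]
    (h : SimplicialPeeling G R 𝓟) (hdisj : ∀ Q ∈ 𝓠, Disjoint Q R) (hne : ∀ Q ∈ 𝓠, Q.Nonempty) :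
    Nonempty (ContinuousMap.HomotopyEquiv
      (Cplx.avoiding (𝓠 ∪ R.image (closedNbr G R))).space (Cplx.avoiding (𝓠 ∪ 𝓟)).space) := by
  induction h generalizing 𝓠 with
  | empty => exact ⟨ContinuousMap.HomotopyEquiv.refl _⟩
  | @peel R 𝓟 v hv _ ih =>
    have hdisj' : ∀ Q ∈ insert (closedNbr G R v) 𝓠, Disjoint Q (R \ closedNbr G R v) :=
      Finset.forall_mem_insert _ _ _ |>.2
        ⟨Finset.disjoint_sdiff, fun Q hQ => (hdisj Q hQ).mono_right Finset.sdiff_subset⟩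
    have hne' : ∀ Q ∈ insert (closedNbr G R v) 𝓠, Q.Nonempty :=
      Finset.forall_mem_insert _ _ _ |>.2 ⟨⟨v, mem_closedNbr_self hv.1⟩, hne⟩
    obtain ⟨E⟩ := hv.nonempty_homotopyEquiv_avoiding hdisj hne
    obtain ⟨F⟩ := ih hdisj' hne'
    rw [Finset.union_insert, ← Finset.insert_union]
    exact ⟨E.trans F⟩

lemma domCpx_eq_avoiding [Fintype V] (G : SimpleGraph V) :
    domCpx G = Cplx.avoiding (Finset.univ.image (closedNbr G Finset.univ)) := by
  refine Cplx.ext_faces fun σ => ?_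
  simp only [domCpx, Cplx.avoiding, Finset.forall_mem_image, Finset.mem_univ, true_imp_iff,
    Finset.not_subset, mem_closedNbr, true_and]
  exact forall_congr' fun v => exists_congr fun w => and_comm

theorem SimplicialPeeling.nonempty_homotopyEquiv_domCpx [Fintype V]
    (h : SimplicialPeeling G Finset.univ 𝓟) :
    Nonempty (ContinuousMap.HomotopyEquiv (domCpx G).space (Cplx.avoiding 𝓟).space) := by
  have hE := h.nonempty_homotopyEquiv_avoiding_union (𝓠 := ∅) (by simp) (by simp)
  rwa [Finset.empty_union, Finset.empty_union, ← domCpx_eq_avoiding] at hE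

end Dominance

lemma nonempty_homeomorph_sphere_of_sameRay {X E : Type*} [TopologicalSpace X]
    [NormedAddCommGroup E] [NormedSpace ℝ E] {φ : X → E} {ψ : Metric.sphere (0 : E) 1 → X}
    (hφ : Continuous φ) (hψ : Continuous ψ) (hne : ∀ x, φ x ≠ 0)
    (hleft : ∀ x g, SameRay ℝ (φ x) g.1 → ψ g = x) (hright : ∀ g, SameRay ℝ (φ (ψ g)) g.1) :
    Nonempty (X ≃ₜ Metric.sphere (0 : E) 1) := by
  have hnorm (x : X) : ‖φ x‖ ≠ 0 := norm_ne_zero_iff.2 (hne x)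
  let φ' (x : X) : Metric.sphere (0 : E) 1 :=
    ⟨‖φ x‖⁻¹ • φ x, by simp [norm_smul, hnorm]⟩
  refine ⟨⟨⟨φ', ψ, fun x => hleft x _ ?_, fun g => Subtype.ext ?_⟩, ?_, hψ⟩⟩
  · exact SameRay.sameRay_nonneg_smul_right _ (by positivity)
  · have hray := (hright g).inv_norm_smul_eq (hne _) (ne_zero_of_mem_unit_sphere g)
    rwa [norm_eq_of_mem_sphere, inv_one, one_smul] at hray
  · exact ((hφ.norm.inv₀ hnorm).smul hφ).subtype_mk _

section BlockReduce

variable {V : Type*} [Fintype V] [DecidableEq V]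

/-- The functions which are constant on each block of a partition; the realization of
`Cplx.avoiding P.parts` projects to a sphere modulo this subspace. -/
def blockConst (P : Finpartition (Finset.univ : Finset V)) : Submodule ℝ (V → ℝ) where
  carrier := {g | ∀ ⦃x y⦄, P.part x = P.part y → g x = g y}
  add_mem' hg hh _ _ hxy := congrArg₂ (· + ·) (hg hxy) (hh hxy)
  zero_mem' _ _ _ := rfl
  smul_mem' a _ hg _ _ hxy := congrArg (a * ·) (hg hxy)

variable {P : Finpartition (Finset.univ : Finset V)}

lemma finrank_blockConst : Module.finrank ℝ (blockConst P) = P.parts.card := by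
  let block (x : V) : P.parts := ⟨P.part x, P.part_mem.2 (Finset.mem_univ x)⟩
  have hblock : Function.Surjective block := fun B => by
    obtain ⟨x, -, hx⟩ := P.part_surjOn B.2
    exact ⟨x, Subtype.ext hx⟩
  have hrange : LinearMap.range (LinearMap.funLeft ℝ ℝ block) = blockConst P := by
    ext g
    constructor
    · rintro ⟨c, rfl⟩ x y hxy
      exact congrArg c (Subtype.ext hxy)
    · intro hg
      refine ⟨fun B => g (hblock B).choose, funext fun x => hg ?_⟩
      exact congrArg Subtype.val (hblock (block x)).choose_spec
  have hinj := LinearMap.funLeft_injective_of_surjective ℝ ℝ block hblock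
  rw [← hrange, LinearMap.finrank_range_of_inj hinj, Module.finrank_fintype_fun_eq_card,
    Fintype.card_coe]

lemma exists_surjective_ker_eq_blockConst {E : Type*} [AddCommGroup E] [Module ℝ E]
    [FiniteDimensional ℝ E] (hE : Module.finrank ℝ E = Fintype.card V - P.parts.card) :
    ∃ π : (V → ℝ) →ₗ[ℝ] E, Function.Surjective π ∧ LinearMap.ker π = blockConst P := by
  have hquot : Module.finrank ℝ ((V → ℝ) ⧸ blockConst P) = Module.finrank ℝ E := by
    rw [Submodule.finrank_quotient, Module.finrank_fintype_fun_eq_card, finrank_blockConst, hE]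
  let e := LinearEquiv.ofFinrankEq _ _ hquot
  refine ⟨e.toLinearMap ∘ₗ (blockConst P).mkQ, e.surjective.comp (Submodule.mkQ_surjective _), ?_⟩
  rw [LinearEquiv.ker_comp, Submodule.ker_mkQ]

/-- The translate of `g` by a function constant on the blocks of `P` which has minimum `0` on each
block. -/
noncomputable def blockReduce (P : Finpartition (Finset.univ : Finset V)) (g : V → ℝ) (x : V) : ℝ :=
  g x - minCoord (P.part x) g

lemma part_nonempty (P : Finpartition (Finset.univ : Finset V)) (x : V) : (P.part x).Nonempty :=
  ⟨x, P.mem_part_self.2 (Finset.mem_univ x)⟩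

lemma continuous_blockReduce : Continuous (blockReduce P) :=
  continuous_pi fun x => (continuous_apply x).sub (continuous_minCoord (part_nonempty P x))

lemma blockReduce_nonneg (g : V → ℝ) (x : V) : 0 ≤ blockReduce P g x :=
  sub_nonneg.2 (minCoord_le (P.mem_part_self.2 (Finset.mem_univ x)))

lemma sub_blockReduce_mem_blockConst (g : V → ℝ) : g - blockReduce P g ∈ blockConst P := by
  intro x y hxy
  simp only [Pi.sub_apply, blockReduce, sub_sub_cancel, hxy]

lemma sum_blockReduce_pos {g : V → ℝ} (hg : g ∉ blockConst P) : 0 < ∑ x, blockReduce P g x := by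
  refine (Fintype.sum_nonneg (blockReduce_nonneg g)).lt_of_ne' fun h => hg ?_
  have hzero := (Fintype.sum_eq_zero_iff_of_nonneg (blockReduce_nonneg g)).1 h
  simpa only [hzero, sub_zero] using sub_blockReduce_mem_blockConst (P := P) g

end BlockReduce

section BlockPoint

variable {V : Type} [Fintype V] [DecidableEq V] {P : Finpartition (Finset.univ : Finset V)}

lemma faces_coordSupport_smul_blockReduce (a : ℝ) (g : V → ℝ) :
    (Cplx.avoiding P.parts).faces (coordSupport (a • blockReduce P g)) := by
  intro B hB hBg
  obtain ⟨x, hx, hmin⟩ := exists_eq_minCoord (P.nonempty_of_mem_parts hB) g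
  refine mem_coordSupport.1 (hBg hx) ?_
  rw [Pi.smul_apply, blockReduce, P.part_eq_of_mem hB hx, hmin, sub_self, smul_zero]

lemma blockReduce_eq {g h : V → ℝ} (hgh : g - h ∈ blockConst P) (hh : ∀ x, 0 ≤ h x)
    (hface : (Cplx.avoiding P.parts).faces (coordSupport h)) : blockReduce P g = h := by
  funext x
  have hshift {y : V} (hy : y ∈ P.part x) : g y - h y = g x - h x :=
    hgh (P.part_eq_of_mem (P.part_mem.2 (Finset.mem_univ x)) hy)
  obtain ⟨y, hy, hgy⟩ := exists_eq_minCoord (part_nonempty P x) g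
  obtain ⟨z, hz, hhz⟩ := Finset.not_subset.1 (hface _ (P.part_mem.2 (Finset.mem_univ x)))
  rw [mem_coordSupport, not_not] at hhz
  have hle := minCoord_le (f := g) hz
  rw [blockReduce]
  linarith [hshift hy, hshift hz, hh y]

lemma notMem_blockConst (f : (Cplx.avoiding P.parts).space) : f.1 ∉ blockConst P := by
  intro hconst
  have hzero (x : V) : f.1 x = 0 := by
    obtain ⟨z, hz, hfz⟩ := Finset.not_subset.1 (f.2.2.2 _ (P.part_mem.2 (Finset.mem_univ x)))
    rw [← hconst (P.part_eq_of_mem (P.part_mem.2 (Finset.mem_univ x)) hz)]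
    simpa only [Finset.mem_filter_univ, not_not] using hfz
  exact zero_ne_one ((Fintype.sum_eq_zero _ hzero).symm.trans f.2.1)

/-- The point of the realization of `Cplx.avoiding P.parts` in the direction of `g`, modulo
functions constant on the blocks. -/
noncomputable def blockPoint (g : V → ℝ) (hg : g ∉ blockConst P) :
    (Cplx.avoiding P.parts).space :=
  ⟨(∑ x, blockReduce P g x)⁻¹ • blockReduce P g, by
    simp only [Pi.smul_apply, smul_eq_mul, ← Finset.mul_sum]
    exact inv_mul_cancel₀ (sum_blockReduce_pos hg).ne',
    fun x => mul_nonneg (inv_nonneg.2 (sum_blockReduce_pos hg).le) (blockReduce_nonneg g x),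
    faces_coordSupport_smul_blockReduce _ g⟩

lemma blockPoint_eq {f : (Cplx.avoiding P.parts).space} {g : V → ℝ} (hg : g ∉ blockConst P)
    {r : ℝ} (hr : 0 < r) (hgf : g - r • f.1 ∈ blockConst P) : blockPoint g hg = f := by
  have hreduce : blockReduce P g = r • f.1 := by
    refine blockReduce_eq hgf (fun x => mul_nonneg hr.le (f.2.2.1 x)) ?_
    refine (Cplx.avoiding P.parts).down_closed (fun x hx => ?_) f.2.2.2
    exact mem_coordSupport.2 fun h => mem_coordSupport.1 hx (by simp [h])
  refine Subtype.ext ?_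
  simp only [blockPoint, hreduce, Pi.smul_apply, smul_eq_mul, ← Finset.mul_sum, f.2.1, mul_one]
  exact inv_smul_smul₀ hr.ne' f.1

lemma continuous_blockPoint {X : Type*} [TopologicalSpace X] {g : X → V → ℝ}
    (hcont : Continuous g) (hg : ∀ x, g x ∉ blockConst P) :
    Continuous fun x => blockPoint (g x) (hg x) := by
  have hred : Continuous fun x => blockReduce P (g x) := continuous_blockReduce.comp hcont
  refine Continuous.subtype_mk (Continuous.smul (Continuous.inv₀ ?_ fun x =>
    (sum_blockReduce_pos (hg x)).ne') hred) _
  exact continuous_finsetSum _ fun y _ => (continuous_apply y).comp hred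

theorem nonempty_homeomorph_sphere_of_finpartition {E : Type*} [NormedAddCommGroup E]
    [NormedSpace ℝ E] [FiniteDimensional ℝ E]
    (hE : Module.finrank ℝ E = Fintype.card V - P.parts.card) :
    Nonempty ((Cplx.avoiding P.parts).space ≃ₜ Metric.sphere (0 : E) 1) := by
  obtain ⟨π, hπ, hker⟩ := exists_surjective_ker_eq_blockConst hE
  obtain ⟨s, hs⟩ := π.exists_rightInverse_of_surjective (LinearMap.range_eq_top.2 hπ)
  have hsection (g : E) : π (s g) = g := LinearMap.congr_fun hs g
  have hnotMem (g : Metric.sphere (0 : E) 1) : s g.1 ∉ blockConst P := by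
    rw [← hker, LinearMap.mem_ker, hsection]
    exact ne_zero_of_mem_unit_sphere g
  have hπf (f : (Cplx.avoiding P.parts).space) : π f.1 ≠ 0 := fun h =>
    notMem_blockConst f (hker ▸ LinearMap.mem_ker.2 h)
  refine nonempty_homeomorph_sphere_of_sameRay (φ := fun f => π f.1)
    (ψ := fun g => blockPoint (s g.1) (hnotMem g))
    (π.continuous_of_finiteDimensional.comp continuous_subtype_val)
    (continuous_blockPoint (s.continuous_of_finiteDimensional.comp continuous_subtype_val) _)
    hπf (fun f g hray => ?_) fun g => ?_
  · obtain ⟨r, hr, hrg⟩ := hray.exists_pos_left (hπf f) (ne_zero_of_mem_unit_sphere g)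
    refine blockPoint_eq _ hr ?_
    rw [← hker, LinearMap.sub_mem_ker_iff, hsection, map_smul, hrg]
  · have hreduce : π (blockReduce P (s g.1)) = g.1 := by
      have hmem := sub_blockReduce_mem_blockConst (P := P) (s g.1)
      rw [← hker, LinearMap.sub_mem_ker_iff, hsection] at hmem
      exact hmem.symm
    simp only [blockPoint, map_smul, hreduce]
    exact SameRay.sameRay_nonneg_smul_left _ (inv_nonneg.2 (sum_blockReduce_pos (hnotMem g)).le)

end BlockPoint

theorem dominance_chordal_homotopyEquiv_sphere_general {V : Type} [Fintype V] [DecidableEq V]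
    (G : SimpleGraph V) {𝓟 : Finset (Finset V)} (h : SimplicialPeeling G Finset.univ 𝓟) :
    Nonempty (ContinuousMap.HomotopyEquiv (domCpx G).space
      (Metric.sphere (0 : EuclideanSpace ℝ (Fin (vcNum G))) 1)) := by
  obtain ⟨E⟩ := h.nonempty_homotopyEquiv_domCpx
  obtain ⟨P, rfl⟩ := h.exists_finpartition
  obtain ⟨F⟩ := nonempty_homeomorph_sphere_of_finpartition (P := P)
    (finrank_euclideanSpace_fin.trans h.card_sub_card_eq_vcNum.symm)
  exact ⟨E.trans F.toHomotopyEquiv⟩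

/-- Theorem 4.5 (Taylan): the dominance complex of a chordal graph `G` is homotopy
equivalent to the sphere `S^{τ(G)-1}`. -/
theorem dominance_chordal_homotopyEquiv_sphere {V : Type} [Fintype V] [DecidableEq V]
    (G : SimpleGraph V) (hch : IsChordal G) :
    Nonempty (ContinuousMap.HomotopyEquiv (domCpx G).space
      (Metric.sphere (0 : EuclideanSpace ℝ (Fin (vcNum G))) 1)) := by
  obtain ⟨𝓟, h⟩ := hch.exists_simplicialPeeling Finset.univ
  exact dominance_chordal_homotopyEquiv_sphere_general G h
end

section
/- Let G be a finite simple graph whose minimum degree is at least 2. Assume that for every vertex v of G of degree 2 there exists a vertex a such that the length of the shortest path between v and a is at least 3. Then the dominance complex D(G) is 1-connected (path-connected with trivial fundamental group). -/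
open SimpleGraph

/-!
The open stars of the vertices cover the realization, and the intersection of the stars of the
vertices of a face is star-convex about the barycenter of that face. A van Kampen argument for such
a cover shows that a complex is simply connected once the boundary of every triangle of vertices is
the base of a cone in the `2`-skeleton.

A non-face of `D(G)` contains a closed neighborhood. Since all degrees are at least `2`, all pairs
are faces, and a triple is a non-face only if it is the closed neighborhood `N[z]` of a vertex `z`
of degree `2`. A vertex `a` at distance at least `3` from `z` is then an apex of a cone over the
boundary of this triangle: the complement of a face inside `N[z]` contains `N[a]`, so after the
removal of `a` every other vertex of `N[a]` still dominates itself, and also dominates `a`.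
-/

section OpenCover

open Path Set unitInterval

variable {X : Type*} [TopologicalSpace X] {s t u : Set X} {w x y z : X}

theorem homotopic_of_forall_mem_isSimplyConnected (hs : IsSimplyConnected s) (p q : Path x y)
    (hp : ∀ r, p r ∈ s) (hq : ∀ r, q r ∈ s) : p.Homotopic q := by
  have := hs.simplyConnectedSpace
  lift x to s using by simpa using hp 0
  lift y to s using by simpa using hp 1
  let p' : Path x y := ⟨⟨fun r ↦ ⟨p r, hp r⟩, by fun_prop⟩, by simp, by simp⟩
  let q' : Path x y := ⟨⟨fun r ↦ ⟨q r, hq r⟩, by fun_prop⟩, by simp, by simp⟩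
  exact (SimplyConnectedSpace.paths_homotopic p' q').map ⟨Subtype.val, continuous_subtype_val⟩

/-- The homotopy class in `X` of the paths from `x` to `y` inside a simply connected set. -/
noncomputable def pathClassWithin (hs : IsSimplyConnected s) (hx : x ∈ s) (hy : y ∈ s) :
    Homotopic.Quotient x y :=
  .mk (hs.isPathConnected.joinedIn x hx y hy).somePath

theorem mk_eq_pathClassWithin (hs : IsSimplyConnected s) (hx : x ∈ s) (hy : y ∈ s)
    (p : Path x y) (hp : ∀ r, p r ∈ s) : Homotopic.Quotient.mk p = pathClassWithin hs hx hy :=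
  Homotopic.Quotient.eq.2 <|
    homotopic_of_forall_mem_isSimplyConnected hs _ _ hp (JoinedIn.somePath_mem _)

theorem pathClassWithin_trans (hs : IsSimplyConnected s) (hx : x ∈ s) (hy : y ∈ s)
    (hz : z ∈ s) :
    (pathClassWithin hs hx hy).trans (pathClassWithin hs hy hz) = pathClassWithin hs hx hz := by
  rw [pathClassWithin, pathClassWithin, ← Homotopic.Quotient.mk_trans]
  refine mk_eq_pathClassWithin hs _ _ _ fun r ↦ ?_
  rw [trans_apply]
  split_ifs <;> exact JoinedIn.somePath_mem _ _

theorem pathClassWithin_self (hs : IsSimplyConnected s) (hx : x ∈ s) :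
    pathClassWithin hs hx hx = .refl x :=
  (mk_eq_pathClassWithin hs hx hx (.refl x) fun _ ↦ hx).symm

theorem pathClassWithin_eq_of_inter (hs : IsSimplyConnected s) (ht : IsSimplyConnected t)
    (hst : IsPathConnected (s ∩ t)) (hx : x ∈ s ∩ t) (hy : y ∈ s ∩ t) :
    pathClassWithin hs hx.1 hy.1 = pathClassWithin ht hx.2 hy.2 := by
  have h := (hst.joinedIn x hx y hy).somePath_mem
  rw [← mk_eq_pathClassWithin hs hx.1 hy.1 _ fun r ↦ (h r).1,
    mk_eq_pathClassWithin ht _ _ _ fun r ↦ (h r).2]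

/-- The homotopy class of the paths that run from `x` inside `s` to a point of `s ∩ t` and from
there inside `t` to `y`. -/
noncomputable def crossingClass (hs : IsSimplyConnected s) (ht : IsSimplyConnected t)
    (hst : IsPathConnected (s ∩ t)) (hx : x ∈ s) (hy : y ∈ t) : Homotopic.Quotient x y :=
  (pathClassWithin hs hx hst.nonempty.choose_spec.1).trans
    (pathClassWithin ht hst.nonempty.choose_spec.2 hy)

theorem crossingClass_eq (hs : IsSimplyConnected s) (ht : IsSimplyConnected t)
    (hst : IsPathConnected (s ∩ t)) (hx : x ∈ s) (hy : y ∈ t) (hw : w ∈ s ∩ t) :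
    crossingClass hs ht hst hx hy =
      (pathClassWithin hs hx hw.1).trans (pathClassWithin ht hw.2 hy) := by
  have hm := hst.nonempty.choose_spec
  rw [crossingClass, ← pathClassWithin_trans hs hx hm.1 hw.1, Homotopic.Quotient.trans_assoc,
    pathClassWithin_eq_of_inter hs ht hst hm hw, pathClassWithin_trans]

theorem crossingClass_self_right (hs : IsSimplyConnected s) (ht : IsSimplyConnected t)
    (hst : IsPathConnected (s ∩ t)) (hx : x ∈ s) (hy : y ∈ s ∩ t) :
    crossingClass hs ht hst hx hy.2 = pathClassWithin hs hx hy.1 := by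
  rw [crossingClass_eq hs ht hst hx hy.2 hy, pathClassWithin_self, Homotopic.Quotient.trans_refl]

theorem crossingClass_trans (hs : IsSimplyConnected s) (ht : IsSimplyConnected t)
    (hu : IsSimplyConnected u) (hst : IsPathConnected (s ∩ t)) (htu : IsPathConnected (t ∩ u))
    (hsu : IsPathConnected (s ∩ u)) (hstu : (s ∩ t ∩ u).Nonempty)
    (hx : x ∈ s) (hy : y ∈ t) (hz : z ∈ u) :
    (crossingClass hs ht hst hx hy).trans (crossingClass ht hu htu hy hz) =
      crossingClass hs hu hsu hx hz := by
  obtain ⟨w, ⟨hws, hwt⟩, hwu⟩ := hstu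
  rw [crossingClass_eq hs ht hst hx hy ⟨hws, hwt⟩, crossingClass_eq ht hu htu hy hz ⟨hwt, hwu⟩,
    crossingClass_eq hs hu hsu hx hz ⟨hws, hwu⟩, Homotopic.Quotient.trans_assoc,
    ← Homotopic.Quotient.trans_assoc (pathClassWithin ht hwt hy), pathClassWithin_trans,
    pathClassWithin_self, Homotopic.Quotient.refl_trans]

theorem mk_subpath_trans_mk_subpath (p : Path x y) (a b c : I) :
    (Homotopic.Quotient.mk (p.subpath a b)).trans (.mk (p.subpath b c)) =
      Homotopic.Quotient.mk (p.subpath a c) := by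
  rw [← Homotopic.Quotient.mk_trans]
  exact Homotopic.Quotient.eq.2 ⟨Homotopy.subpathTransSubpath p a b c⟩

theorem mk_eq_of_open_cover {ι : Type*} {U : ι → Set X} (hU : ∀ i, IsOpen (U i))
    (hcover : ⋃ i, U i = univ) (d : ∀ x y, Homotopic.Quotient x y)
    (hd : ∀ x y z, (d x y).trans (d y z) = d x z)
    (hlocal : ∀ i (x y : X) (p : Path x y), (∀ r, p r ∈ U i) → Homotopic.Quotient.mk p = d x y)
    (p : Path x y) :
    Homotopic.Quotient.mk p = d x y := by
  obtain ⟨t, ht0, htm, ⟨n, hn⟩, ht⟩ :=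
    exists_monotone_Icc_subset_open_cover_unitInterval (c := fun i ↦ p ⁻¹' U i)
      (fun i ↦ (hU i).preimage p.continuous) (by rw [← preimage_iUnion, hcover]; simp)
  have of_le {a b : I} (hab : a ≤ b) {i : ι} (hi : Icc a b ⊆ p ⁻¹' U i) :
      Homotopic.Quotient.mk (p.subpath a b) = d (p a) (p b) := by
    refine hlocal i _ _ _ (range_subset_iff.1 ?_)
    rw [p.range_subpath_of_le a b hab]
    exact image_subset_iff.2 hi
  have partial_eq (m : ℕ) :
      Homotopic.Quotient.mk (p.subpath (t 0) (t m)) = d (p (t 0)) (p (t m)) := by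
    induction m with
    | zero =>
      obtain ⟨i, hi⟩ := ht 0
      exact of_le le_rfl ((Icc_subset_Icc_right (htm zero_le_one)).trans hi)
    | succ m ih =>
      obtain ⟨i, hi⟩ := ht m
      rw [← mk_subpath_trans_mk_subpath p _ (t m), ih, of_le (htm m.le_succ) hi, hd]
  have of_cast {a b : X} (ha : a = x) (hb : b = y)
      (h : Homotopic.Quotient.mk (p.cast ha hb) = d a b) :
      Homotopic.Quotient.mk p = d x y := by
    subst ha hb
    exact h
  have h := partial_eq n
  rw [ht0, hn n le_rfl, subpath_zero_one] at h
  exact of_cast p.source p.target h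

theorem crossingClass_trans_of_cone {ι : Type*} {U : ι → Set X}
    (hsc : ∀ i, IsSimplyConnected (U i)) (hpc : ∀ i j, IsPathConnected (U i ∩ U j)) {i j k l : ι}
    (hij : (U l ∩ U i ∩ U j).Nonempty) (hjk : (U l ∩ U j ∩ U k).Nonempty)
    (hik : (U l ∩ U i ∩ U k).Nonempty) (hx : x ∈ U i) (hy : y ∈ U j) (hz : z ∈ U k) :
    (crossingClass (hsc i) (hsc j) (hpc i j) hx hy).trans
      (crossingClass (hsc j) (hsc k) (hpc j k) hy hz) =
      crossingClass (hsc i) (hsc k) (hpc i k) hx hz := by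
  obtain ⟨q, hq⟩ := (hsc l).nonempty
  have from_apex {m n : ι} {a b : X} (h : (U l ∩ U m ∩ U n).Nonempty) (ha : a ∈ U m)
      (hb : b ∈ U n) :
      crossingClass (hsc m) (hsc n) (hpc m n) ha hb =
        (crossingClass (hsc l) (hsc m) (hpc l m) hq ha).symm.trans
          (crossingClass (hsc l) (hsc n) (hpc l n) hq hb) := by
    rw [← crossingClass_trans (hsc l) (hsc m) (hsc n) (hpc l m) (hpc m n) (hpc l n) h hq ha hb,
      ← Homotopic.Quotient.trans_assoc, Homotopic.Quotient.symm_trans,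
      Homotopic.Quotient.refl_trans]
  rw [from_apex hij, from_apex hjk, from_apex hik, Homotopic.Quotient.trans_assoc,
    ← Homotopic.Quotient.trans_assoc (crossingClass (hsc l) (hsc j) (hpc l j) hq hy),
    Homotopic.Quotient.trans_symm, Homotopic.Quotient.refl_trans]

theorem simplyConnectedSpace_of_open_cover {ι : Type*} [Nonempty ι] {U : ι → Set X}
    (hU : ∀ i, IsOpen (U i)) (hcover : ⋃ i, U i = univ)
    (hsc : ∀ i, IsSimplyConnected (U i)) (hpc : ∀ i j, IsPathConnected (U i ∩ U j))
    (hcone : ∀ i j k, ∃ l, (U l ∩ U i ∩ U j).Nonempty ∧ (U l ∩ U j ∩ U k).Nonempty ∧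
      (U l ∩ U i ∩ U k).Nonempty) :
    SimplyConnectedSpace X := by
  let e {i j : ι} {x y : X} (hx : x ∈ U i) (hy : y ∈ U j) : Homotopic.Quotient x y :=
    crossingClass (hsc i) (hsc j) (hpc i j) hx hy
  have e_trans {i j k : ι} {x y z : X} (hx : x ∈ U i) (hy : y ∈ U j) (hz : z ∈ U k) :
      (e hx hy).trans (e hy hz) = e hx hz := by
    obtain ⟨l, hij, hjk, hik⟩ := hcone i j k
    exact crossingClass_trans_of_cone hsc hpc hij hjk hik hx hy hz
  have e_self {i j : ι} {x : X} (hi : x ∈ U i) (hj : x ∈ U j) : e hi hj = .refl x :=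
    (crossingClass_self_right (hsc i) (hsc j) (hpc i j) hi ⟨hi, hj⟩).trans
      (pathClassWithin_self _ _)
  choose v hv using iUnion_eq_univ_iff.1 hcover
  have mk_eq {x y : X} (p : Path x y) : Homotopic.Quotient.mk p = e (hv x) (hv y) := by
    refine mk_eq_of_open_cover hU hcover (fun x y ↦ e (hv x) (hv y))
      (fun x y z ↦ e_trans (hv x) (hv y) (hv z)) (fun i x y p hp ↦ ?_) p
    have hx : x ∈ U i := by simpa using hp 0
    have hy : y ∈ U i := by simpa using hp 1
    calc Homotopic.Quotient.mk p
      _ = pathClassWithin (hsc i) hx hy := mk_eq_pathClassWithin (hsc i) hx hy p hp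
      _ = e hx hy := (crossingClass_self_right (hsc i) (hsc i) (hpc i i) hx ⟨hy, hy⟩).symm
      _ = (e (hv x) hx).trans ((e hx hy).trans (e hy (hv y))) := by
        rw [e_self (hv x) hx, e_self hy (hv y), Homotopic.Quotient.refl_trans,
          Homotopic.Quotient.trans_refl]
      _ = e (hv x) (hv y) := by rw [e_trans, e_trans]
  refine (simply_connected_iff_unique_homotopic X).2
    ⟨(hsc (Classical.arbitrary ι)).nonempty.to_type, fun x y ↦ ⟨⟨⟨e (hv x) (hv y)⟩, fun γ ↦ ?_⟩⟩⟩
  obtain ⟨p, rfl⟩ := Homotopic.Quotient.mk_surjective γ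
  exact mk_eq p

end OpenCover

namespace Cplx

variable {V : Type} [Fintype V] (K : Cplx V)

/-- The points of the realization whose barycentric coordinates at the elements of `σ` are all
positive; for a face `σ`, this is its open star. -/
def openStar (σ : Finset V) : Set K.space := {x | ∀ v ∈ σ, 0 < x.1 v}

theorem isOpen_openStar (σ : Finset V) : IsOpen (K.openStar σ) := by
  have continuous_coord (v : V) : Continuous fun x : K.space ↦ x.1 v :=
    (continuous_apply v).comp continuous_subtype_val
  simp only [openStar, Set.ofPred_forall]
  exact isOpen_biInter_finset fun v _ ↦ isOpen_lt continuous_const (continuous_coord v)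

theorem openStar_insert [DecidableEq V] (v : V) (σ : Finset V) :
    K.openStar (insert v σ) = K.openStar {v} ∩ K.openStar σ := by
  ext x
  simp [openStar]

theorem iUnion_openStar_singleton : ⋃ v, K.openStar {v} = Set.univ := by
  refine Set.iUnion_eq_univ_iff.2 fun x ↦ ?_
  obtain ⟨v, -, hv⟩ := Finset.exists_lt_of_sum_lt (s := Finset.univ) (f := fun _ ↦ (0 : ℝ))
    (g := x.1) (by rw [x.2.1]; simp)
  exact ⟨v, by simpa [openStar] using hv⟩

variable {K}

theorem exists_forall_pos_iff_mem {σ : Finset V} (hσ : K.faces σ) (hne : σ.Nonempty) :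
    ∃ x : K.space, ∀ v, 0 < x.1 v ↔ v ∈ σ := by
  classical
  have hcard : (0 : ℝ) < σ.card := by exact_mod_cast hne.card_pos
  let β (v : V) : ℝ := if v ∈ σ then (σ.card : ℝ)⁻¹ else 0
  refine ⟨⟨β, ?_, fun v ↦ ?_, K.down_closed (fun v ↦ ?_) hσ⟩, fun v ↦ ?_⟩
  · simp [β, hcard.ne']
  · dsimp only [β]
    positivity
  · simp +contextual [β]
  · by_cases hv : v ∈ σ <;> simp [β, hv, hne.card_pos]

theorem starConvex_image_openStar {σ : Finset V} {x₀ : K.space}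
    (hx₀ : ∀ v, 0 < x₀.1 v ↔ v ∈ σ) :
    StarConvex ℝ x₀.1 ((Subtype.val : K.space → V → ℝ) '' K.openStar σ) := by
  rintro _ ⟨x, hx, rfl⟩ a b ha hb hab
  have hpos (v : V) (hv : v ∈ σ) : 0 < a * x₀.1 v + b * x.1 v := by
    obtain rfl | ha := ha.eq_or_lt
    · simpa [show b = 1 by linarith] using hx v hv
    · exact add_pos_of_pos_of_nonneg (mul_pos ha ((hx₀ v).2 hv)) (mul_nonneg hb (x.2.2.1 v))
  have support_subset (v : V) (hv : a * x₀.1 v + b * x.1 v ≠ 0) : x.1 v ≠ 0 := fun hxv ↦ by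
    by_cases hvσ : v ∈ σ
    · exact (hx v hvσ).ne' hxv
    · have : x₀.1 v = 0 := (not_lt.1 (mt (hx₀ v).1 hvσ)).antisymm (x₀.2.2.1 v)
      simp [this, hxv] at hv
  refine ⟨⟨a • x₀.1 + b • x.1, ?_, fun v ↦ ?_, K.down_closed (fun v ↦ ?_) x.2.2.2⟩, hpos, rfl⟩
  · simp [Finset.sum_add_distrib, ← Finset.mul_sum, x₀.2.1, x.2.1, hab]
  · exact add_nonneg (mul_nonneg ha (x₀.2.2.1 v)) (mul_nonneg hb (x.2.2.1 v))
  · simpa using support_subset v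

theorem isSimplyConnected_openStar {σ : Finset V} (hσ : K.faces σ) (hne : σ.Nonempty) :
    IsSimplyConnected (K.openStar σ) := by
  have hemb : Topology.IsEmbedding (Subtype.val : K.space → V → ℝ) := .subtypeVal
  obtain ⟨x₀, hx₀⟩ := exists_forall_pos_iff_mem hσ hne
  have := (starConvex_image_openStar hx₀).contractibleSpace
    ⟨x₀.1, x₀, fun v hv ↦ (hx₀ v).2 hv, rfl⟩
  exact hemb.isSimplyConnected_image.1 (SimplyConnectedSpace.ofContractible _)

theorem simplyConnectedSpace_of_forall_exists_cone [DecidableEq V] [Nonempty V]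
    (hcone : ∀ u v w, ∃ a, K.faces {a, u, v} ∧ K.faces {a, v, w} ∧ K.faces {a, u, w}) :
    SimplyConnectedSpace K.space := by
  have faces_pair (u v : V) : K.faces {u, v} := by
    obtain ⟨a, h, -⟩ := hcone u v v
    exact K.down_closed (Finset.subset_insert a _) h
  have nonempty_inter {u v w : V} (h : K.faces {u, v, w}) :
      (K.openStar {u} ∩ K.openStar {v} ∩ K.openStar {w}).Nonempty := by
    rw [Set.inter_assoc, ← openStar_insert, ← openStar_insert]
    exact (isSimplyConnected_openStar h (by simp)).nonempty
  refine simplyConnectedSpace_of_open_cover (fun v ↦ K.isOpen_openStar {v})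
    K.iUnion_openStar_singleton (fun v ↦ ?_) (fun u v ↦ ?_) fun u v w ↦ ?_
  · exact isSimplyConnected_openStar (by simpa using faces_pair v v) (by simp)
  · rw [← openStar_insert]
    exact (isSimplyConnected_openStar (faces_pair u v) (by simp)).isPathConnected
  · obtain ⟨a, huv, hvw, huw⟩ := hcone u v w
    exact ⟨a, nonempty_inter huv, nonempty_inter hvw, nonempty_inter huw⟩

end Cplx

section Dominance

variable {V : Type} [Fintype V] [DecidableEq V] {G : SimpleGraph V} {σ τ : Finset V}

theorem mem_insert_neighborFinset_iff_edist [DecidableRel G.Adj] {z x : V} :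
    x ∈ insert z (G.neighborFinset z) ↔ G.edist z x ≤ 1 := by
  rw [Finset.mem_insert, mem_neighborFinset, edist_le_one_iff_adj_or_eq, or_comm, eq_comm]

theorem card_insert_neighborFinset [DecidableRel G.Adj] (z : V) :
    (insert z (G.neighborFinset z)).card = G.degree z + 1 := by
  rw [Finset.card_insert_of_notMem (G.notMem_neighborFinset_self z),
    G.card_neighborFinset_eq_degree]

theorem domCpx_faces_iff_edist :
    (domCpx G).faces σ ↔ ∀ v, ∃ w ∉ σ, G.edist w v ≤ 1 := by
  simp only [domCpx, edist_le_one_iff_adj_or_eq, or_comm]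

theorem not_domCpx_faces_iff [DecidableRel G.Adj] :
    ¬ (domCpx G).faces σ ↔ ∃ z, insert z (G.neighborFinset z) ⊆ σ := by
  simp only [domCpx_faces_iff_edist, Finset.subset_iff, mem_insert_neighborFinset_iff_edist,
    G.edist_comm]
  push Not
  exact exists_congr fun z ↦ forall_congr' fun w ↦ by rw [← not_imp_not, not_lt, not_not]

theorem domCpx_faces_of_card_le_minDegree [DecidableRel G.Adj] (hσ : σ.card ≤ G.minDegree) :
    (domCpx G).faces σ := by
  by_contra hf
  obtain ⟨z, hz⟩ := not_domCpx_faces_iff.1 hf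
  have hcard := Finset.card_le_card hz
  rw [card_insert_neighborFinset] at hcard
  have hmin := G.minDegree_le_degree z
  lia

theorem exists_eq_insert_neighborFinset_of_not_domCpx_faces [DecidableRel G.Adj]
    (hσ : ¬ (domCpx G).faces σ) (hcard : σ.card ≤ G.minDegree + 1) :
    ∃ z, σ = insert z (G.neighborFinset z) := by
  obtain ⟨z, hz⟩ := not_domCpx_faces_iff.1 hσ
  refine ⟨z, (Finset.eq_of_subset_of_card_le hz ?_).symm⟩
  rw [card_insert_neighborFinset]
  exact hcard.trans (Nat.succ_le_succ (G.minDegree_le_degree z))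

theorem domCpx_faces_insert_of_far {z a b : V} (hτ : (domCpx G).faces τ)
    (hz : ∀ x ∈ τ, G.edist z x ≤ 1) (ha : 3 ≤ G.edist z a) (hab : G.Adj a b) :
    (domCpx G).faces (insert a τ) := by
  have notMem_of_near {y : V} (hy : G.edist y a ≤ 1) : y ∉ τ := fun hyτ ↦ by
    have := ha.trans (G.edist_triangle.trans (add_le_add (hz y hyτ) hy))
    norm_num at this
  rw [domCpx_faces_iff_edist] at hτ ⊢
  intro v
  obtain ⟨w, hwτ, hwv⟩ := hτ v
  obtain rfl | hwa := eq_or_ne w a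
  · obtain rfl | hvw := eq_or_ne v w
    · have hbv : G.edist b v ≤ 1 := (edist_eq_one_iff_adj.2 hab.symm).le
      exact ⟨b, by simp [hab.ne', notMem_of_near hbv], hbv⟩
    · exact ⟨v, by simp [hvw, notMem_of_near (edist_comm.trans_le hwv)], by simp⟩
  · exact ⟨w, by simp [hwa, hwτ], hwv⟩

end Dominance

/-- Corollary 5.9: let `G` be a graph of minimum degree at least `2` such that every
vertex `v` of degree `2` admits a vertex `a` at distance at least `3` from `v`.
Then the dominance complex of `G` is `1`-connected. -/
theorem dominance_simplyConnected_of_far_vertex {V : Type} [Fintype V] [DecidableEq V]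
    (G : SimpleGraph V) [DecidableRel G.Adj] (hmin : 2 ≤ G.minDegree)
    (h : ∀ v : V, G.degree v = 2 → ∃ a : V, 3 ≤ G.edist v a) :
    SimplyConnectedSpace (domCpx G).space := by
  have : Nonempty V := not_isEmpty_iff.1 fun _ ↦ by simp at hmin
  refine Cplx.simplyConnectedSpace_of_forall_exists_cone fun u v w ↦ ?_
  by_cases hf : (domCpx G).faces {u, v, w}
  · exact ⟨u, (domCpx G).down_closed (by grind) hf, hf, (domCpx G).down_closed (by grind) hf⟩
  have hcard : ({u, v, w} : Finset V).card ≤ 3 := Finset.card_le_three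
  obtain ⟨z, hN⟩ := exists_eq_insert_neighborFinset_of_not_domCpx_faces hf (by lia)
  rw [hN, card_insert_neighborFinset] at hcard
  obtain ⟨a, ha⟩ := h z (le_antisymm (by lia) (hmin.trans (G.minDegree_le_degree z)))
  obtain ⟨b, hab⟩ :=
    (G.degree_pos_iff_exists_adj a).1 (two_pos.trans_le (hmin.trans (G.minDegree_le_degree a)))
  have faces_cone {x y : V} (hxy : {x, y} ⊆ ({u, v, w} : Finset V)) :
      (domCpx G).faces {a, x, y} :=
    domCpx_faces_insert_of_far
      (domCpx_faces_of_card_le_minDegree (Finset.card_le_two.trans hmin))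
      (fun t ht ↦ mem_insert_neighborFinset_iff_edist.1 (hN ▸ hxy ht)) ha hab
  exact ⟨a, faces_cone (by grind), faces_cone (by grind), faces_cone (by grind)⟩
end

section
/- For every integer k ≥ 1, the dominance complex D(C_{4k}) is homotopy equivalent to a wedge of three copies of S^{2k−1}, and for i = 1, 2, 3 (with 4k + i ≥ 3) the dominance complex D(C_{4k+i}) is homotopy equivalent to the sphere S^{2k−2+i}. -/
open SimpleGraph

/-- The `d`-dimensional unit sphere. -/
abbrev sph (d : ℕ) : Type := Metric.sphere (0 : EuclideanSpace ℝ (Fin (d + 1))) 1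

/-- A base point on the `d`-sphere. -/
noncomputable def basePt (d : ℕ) : sph d :=
  ⟨EuclideanSpace.single 0 1, by simp [EuclideanSpace.norm_single]⟩

/-- The wedge of `c d` copies of the `d`-sphere, over all dimensions `d`
(the basepoints of all the spheres are identified). -/
noncomputable def sphereWedge (c : ℕ → ℕ) : Type :=
  Quot (fun (x y : Σ d : ℕ, Fin (c d) × sph d) =>
    x = y ∨ (x.2.2 = basePt x.1 ∧ y.2.2 = basePt y.1))

noncomputable instance (c : ℕ → ℕ) : TopologicalSpace (sphereWedge c) :=
  instTopologicalSpaceQuot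

/-!
Deleting the open star of a face whose link is a cone does not change the homotopy type, not even
after joining with a further complex. Deletions of this kind turn `D(C_{n+4})` into
`D(C_n) * S¹`, so that only `n ≤ 4` matters. For `n ≤ 3` the graph `C_n` is complete and `D(C_n)` is
the boundary of a simplex, while `D(C_4)` is the complete graph on four vertices, which is
equivalent to the join of four points with two points. Joins with circles turn these into boundaries
of cross-polytopes and into the join of four points with the boundary of a cross-polytope. The
latter consists of three spheres glued along a hemisphere, and contracting the hemisphere yields the
wedge.
-/

namespace Cplx

section Realization

variable {V W : Type} [Fintype V] [Fintype W] {K : Cplx V} {L : Cplx W}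

/-- The barycentric coordinates of a point of the realization. -/
def space.coord (f : K.space) : V → ℝ := f.1

theorem space.sum_coord (f : K.space) : ∑ v, f.coord v = 1 := f.2.1

theorem space.coord_nonneg (f : K.space) (v : V) : 0 ≤ f.coord v := f.2.2.1 v

@[ext]
theorem space.ext {f g : K.space} (h : ∀ v, f.coord v = g.coord v) : f = g :=
  Subtype.ext (funext h)

@[fun_prop]
theorem space.continuous_coord (v : V) : Continuous fun f : K.space => f.coord v :=
  (continuous_apply v).comp continuous_subtype_val

open Classical in
/-- The carrier of a point of the realization: the smallest face containing it. -/
noncomputable def space.support (f : K.space) : Finset V :=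
  Finset.univ.filter fun v => f.coord v ≠ 0

@[simp]
theorem space.mem_support {f : K.space} {v : V} : v ∈ f.support ↔ f.coord v ≠ 0 := by
  simp [space.support]

theorem space.faces_support (f : K.space) : K.faces f.support := f.2.2.2

/-- A continuous family of points of the realization of `K`, given by barycentric coordinates. -/
def mkMap {X : Type*} [TopologicalSpace X] (K : Cplx V) (g : X → V → ℝ)
    (hg : ∀ v, Continuous fun x => g x v) (hsum : ∀ x, ∑ v, g x v = 1) (hnn : ∀ x v, 0 ≤ g x v)
    (hface : ∀ x, ∃ τ, K.faces τ ∧ ∀ v, g x v ≠ 0 → v ∈ τ) : C(X, K.space) where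
  toFun x := ⟨g x, hsum x, hnn x, by
    obtain ⟨τ, hτ, h⟩ := hface x
    exact K.down_closed (fun v hv => h v (Finset.mem_filter.1 hv).2) hτ⟩
  continuous_toFun := Continuous.subtype_mk (continuous_pi hg) _

@[simp]
theorem coord_mkMap {X : Type*} [TopologicalSpace X] (g : X → V → ℝ) (hg hsum hnn hface)
    (x : X) (v : V) : (mkMap K g hg hsum hnn hface x).coord v = g x v := rfl

theorem homotopic_of_support_subset {X : Type*} [TopologicalSpace X] {f g : C(X, K.space)}
    (h : ∀ x, ∃ τ, K.faces τ ∧ (f x).support ⊆ τ ∧ (g x).support ⊆ τ) : f.Homotopic g := by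
  refine ⟨⟨mkMap K
    (fun p v => (1 - (p.1 : ℝ)) * (f p.2).coord v + p.1 * (g p.2).coord v)
    (fun v => by fun_prop) (fun p => ?_) (fun p v => ?_) (fun p => ?_),
    fun x => ?_, fun x => ?_⟩⟩
  · rw [Finset.sum_add_distrib, ← Finset.mul_sum, ← Finset.mul_sum, space.sum_coord,
      space.sum_coord]
    ring
  · have := (f p.2).coord_nonneg v
    have := (g p.2).coord_nonneg v
    have := unitInterval.nonneg p.1
    have := unitInterval.one_minus_nonneg p.1
    positivity
  · obtain ⟨τ, hτ, hf, hg⟩ := h p.2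
    refine ⟨τ, hτ, fun v hv => ?_⟩
    by_contra hvτ
    have hfv : (f p.2).coord v = 0 := by_contra fun h0 => hvτ (hf (space.mem_support.2 h0))
    have hgv : (g p.2).coord v = 0 := by_contra fun h0 => hvτ (hg (space.mem_support.2 h0))
    exact hv (by rw [hfv, hgv, mul_zero, mul_zero, add_zero])
  · ext v; simp
  · ext v; simp

/-- Extension of barycentric coordinates by zero along an injective simplicial map. -/
noncomputable def extendMap (e : W ↪ V) (h : ∀ τ, L.faces τ → K.faces (τ.map e)) :
    C(L.space, K.space) :=
  mkMap K (fun f => Function.extend e f.coord (0 : V → ℝ))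
    (fun v => by
      by_cases hv : ∃ u, e u = v
      · obtain ⟨u, rfl⟩ := hv
        simpa only [e.injective.extend_apply] using space.continuous_coord u
      · simpa only [Function.extend_apply' _ _ _ hv] using continuous_const)
    (fun f => (Fintype.sum_of_injective e e.injective _ _
      (fun v hv => Function.extend_apply' _ (0 : V → ℝ) v hv)
      fun u => (e.injective.extend_apply _ _ u).symm).symm.trans f.sum_coord)
    (fun f v => by
      by_cases hv : ∃ u, e u = v
      · obtain ⟨u, rfl⟩ := hv
        simpa only [e.injective.extend_apply] using f.coord_nonneg u
      · exact (Function.extend_apply' _ (0 : V → ℝ) v hv).ge)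
    (fun f => ⟨f.support.map e, h _ f.faces_support, fun v hv => by
      by_cases hv' : ∃ u, e u = v
      · obtain ⟨u, rfl⟩ := hv'
        simpa [e.injective.extend_apply] using hv
      · exact absurd (Function.extend_apply' _ (0 : V → ℝ) v hv') hv⟩)

@[simp]
theorem coord_extendMap (e : W ↪ V) (h : ∀ τ, L.faces τ → K.faces (τ.map e)) (f : L.space)
    (u : W) : (extendMap e h f).coord (e u) = f.coord u :=
  e.injective.extend_apply f.coord (0 : V → ℝ) u

theorem coord_extendMap_of_notMem_range {e : W ↪ V} (h : ∀ τ, L.faces τ → K.faces (τ.map e))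
    (f : L.space) {v : V} (hv : v ∉ Set.range e) : (extendMap e h f).coord v = 0 :=
  Function.extend_apply' f.coord (0 : V → ℝ) v hv

/-- A continuous family of points supported on the range of `e`, as a family of points of the
full subcomplex on that range. -/
def codRestrictMap {X : Type*} [TopologicalSpace X] (e : W ↪ V)
    (h : ∀ τ, K.faces (τ.map e) → L.faces τ) (g : C(X, K.space))
    (hg : ∀ x, ∀ v ∈ (g x).support, v ∈ Set.range e) : C(X, L.space) :=
  mkMap L (fun x u => (g x).coord (e u)) (fun u => by fun_prop)
    (fun x => (Fintype.sum_of_injective e e.injective _ _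
      (fun v hv => by_contra fun h0 => hv (hg x v (space.mem_support.2 h0)))
      fun _ => rfl).trans (g x).sum_coord)
    (fun x u => (g x).coord_nonneg _)
    fun x => ⟨(g x).support.preimage e e.injective.injOn,
      h _ (K.down_closed (Finset.map_subset_iff_subset_preimage.2 subset_rfl)
        (g x).faces_support),
      fun u hu => by simpa using hu⟩

theorem extendMap_codRestrictMap {X : Type*} [TopologicalSpace X] {e : W ↪ V}
    (h : ∀ τ, L.faces τ ↔ K.faces (τ.map e)) (g : C(X, K.space))
    (hg : ∀ x, ∀ v ∈ (g x).support, v ∈ Set.range e) (x : X) :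
    extendMap e (fun τ => (h τ).1) (codRestrictMap e (fun τ => (h τ).2) g hg x) = g x := by
  ext v
  by_cases hv : v ∈ Set.range e
  · obtain ⟨u, rfl⟩ := hv
    exact coord_extendMap _ _ _ u
  · rw [coord_extendMap_of_notMem_range _ _ hv]
    exact by_contra fun h0 => hv (hg x v (space.mem_support.2 (Ne.symm h0)))

/-- Relabelling the vertices of a complex; labels that are not vertices may be dropped. -/
noncomputable def relabel (e : W ↪ V) (h : ∀ τ, L.faces τ ↔ K.faces (τ.map e))
    (hr : ∀ τ, K.faces τ → ∀ v ∈ τ, v ∈ Set.range e) : K.space ≃ₜ L.space where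
  toFun := codRestrictMap e (fun τ => (h τ).2) (.id _) fun f => hr _ f.faces_support
  invFun := extendMap e fun τ => (h τ).1
  left_inv := extendMap_codRestrictMap h _ _
  right_inv f := by ext u; exact coord_extendMap e (fun τ => (h τ).1) f u

end Realization

/-! ### Deleting the open star of a face whose link is a cone -/

/-- `L` arises from `K` by deleting the open star of the face `σ`, where the link of `σ` in `K`
is a cone with apex `w`. -/
structure IsConeDeletion {V : Type} [DecidableEq V] (K L : Cplx V) (σ : Finset V) (w : V) :
    Prop where
  nonempty : σ.Nonempty
  apex_notMem : w ∉ σ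
  faces_iff : ∀ τ, L.faces τ ↔ K.faces τ ∧ ¬ σ ⊆ τ
  faces_insert : ∀ τ, K.faces τ → σ ⊆ τ → K.faces (insert w τ)

section PushOff

variable {V : Type} [DecidableEq V] {σ : Finset V} {w : V}

/-- The coordinates obtained from `f` by moving the same weight from all vertices of `σ` to `w`,
until some vertex of `σ` has weight zero. -/
noncomputable def pushOff (hσ : σ.Nonempty) (w : V) (f : V → ℝ) (v : V) : ℝ :=
  f v + σ.inf' hσ f * ((if v = w then (σ.card : ℝ) else 0) - if v ∈ σ then 1 else 0)

theorem sum_pushOff [Fintype V] (hσ : σ.Nonempty) (w : V) (f : V → ℝ) :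
    ∑ v, pushOff hσ w f v = ∑ v, f v := by
  simp [pushOff, Finset.sum_add_distrib, ← Finset.mul_sum]

theorem pushOff_of_mem (hσ : σ.Nonempty) (hw : w ∉ σ) (f : V → ℝ) {v : V} (hv : v ∈ σ) :
    pushOff hσ w f v = f v - σ.inf' hσ f := by
  simp [pushOff, hv, ne_of_mem_of_not_mem hv hw, sub_eq_add_neg]

theorem pushOff_nonneg (hσ : σ.Nonempty) (hw : w ∉ σ) {f : V → ℝ} (hf : ∀ v, 0 ≤ f v) (v : V) :
    0 ≤ pushOff hσ w f v := by
  by_cases hv : v ∈ σ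
  · rw [pushOff_of_mem hσ hw f hv]
    exact sub_nonneg.2 (Finset.inf'_le f hv)
  · have hm : 0 ≤ σ.inf' hσ f := Finset.le_inf' hσ f fun v _ => hf v
    have := hf v
    simp only [pushOff, hv, if_false, sub_zero]
    positivity

theorem exists_pushOff_eq_zero (hσ : σ.Nonempty) (hw : w ∉ σ) (f : V → ℝ) :
    ∃ v ∈ σ, pushOff hσ w f v = 0 := by
  obtain ⟨v, hv, h⟩ := Finset.exists_mem_eq_inf' hσ f
  exact ⟨v, hv, by rw [pushOff_of_mem hσ hw f hv, h, sub_self]⟩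

theorem pushOff_eq_self (hσ : σ.Nonempty) {f : V → ℝ} (hf : ∀ v, 0 ≤ f v) {u : V} (hu : u ∈ σ)
    (hfu : f u = 0) : pushOff hσ w f = f := by
  have hmin : σ.inf' hσ f = 0 :=
    le_antisymm ((Finset.inf'_le f hu).trans hfu.le) (Finset.le_inf' hσ f fun v _ => hf v)
  ext v
  rw [pushOff, hmin, zero_mul, add_zero]

theorem pushOff_eq_zero (hσ : σ.Nonempty) {f : V → ℝ} (hf : ∀ v, 0 ≤ f v) {v : V} (hv : f v = 0)
    (hvw : v ≠ w) : pushOff hσ w f v = 0 := by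
  by_cases hvσ : v ∈ σ
  · rw [pushOff_eq_self hσ hf hvσ hv, hv]
  · simp [pushOff, hv, hvw, hvσ]

@[fun_prop]
theorem continuous_pushOff {X : Type*} [TopologicalSpace X] (hσ : σ.Nonempty) (w : V)
    {g : X → V → ℝ} (hg : ∀ v, Continuous fun x => g x v) (v : V) :
    Continuous fun x => pushOff hσ w (g x) v :=
  (hg v).add ((Continuous.finset_inf'_apply hσ fun v _ => hg v).mul continuous_const)

end PushOff

namespace IsConeDeletion

variable {V : Type} [Fintype V] [DecidableEq V] {K L : Cplx V} {σ : Finset V} {w : V}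

theorem exists_support_subset (h : IsConeDeletion K L σ w) (f : K.space) :
    ∃ τ, K.faces τ ∧ f.support ⊆ τ ∧ ∀ v, pushOff h.nonempty w f.coord v ≠ 0 → v ∈ τ := by
  by_cases hσ : σ ⊆ f.support
  · refine ⟨insert w f.support, h.faces_insert _ f.faces_support hσ,
      Finset.subset_insert _ _, fun v hv => ?_⟩
    by_contra hvτ
    rw [Finset.mem_insert, space.mem_support, not_or, not_not] at hvτ
    exact hv (pushOff_eq_zero h.nonempty f.coord_nonneg hvτ.2 hvτ.1)
  · obtain ⟨u, hu, hfu⟩ := Finset.not_subset.1 hσ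
    rw [space.mem_support, not_not] at hfu
    refine ⟨f.support, f.faces_support, subset_rfl, fun v hv => ?_⟩
    rwa [pushOff_eq_self h.nonempty f.coord_nonneg hu hfu, ← space.mem_support] at hv

/-- The retraction onto the complement of the open star that pushes points towards the apex. -/
noncomputable def retraction (h : IsConeDeletion K L σ w) : C(K.space, L.space) :=
  mkMap L (fun f => pushOff h.nonempty w f.coord)
    (continuous_pushOff h.nonempty w space.continuous_coord)
    (fun f => (sum_pushOff h.nonempty w f.coord).trans f.sum_coord)
    (fun f => pushOff_nonneg h.nonempty h.apex_notMem f.coord_nonneg)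
    fun f => by
      obtain ⟨τ, hτ, -, hτf⟩ := h.exists_support_subset f
      obtain ⟨u, hu, hfu⟩ := exists_pushOff_eq_zero h.nonempty h.apex_notMem f.coord
      exact ⟨τ.erase u, (h.faces_iff _).2 ⟨K.down_closed (Finset.erase_subset u τ) hτ,
        fun hσ => Finset.notMem_erase u τ (hσ hu)⟩,
        fun v hv => Finset.mem_erase.2 ⟨fun hvu => hv (hvu ▸ hfu), hτf v hv⟩⟩

/-- The inclusion of the smaller complex. -/
def inclusion (h : IsConeDeletion K L σ w) : C(L.space, K.space) :=
  mkMap K space.coord space.continuous_coord space.sum_coord space.coord_nonneg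
    fun f => ⟨f.support, ((h.faces_iff _).1 f.faces_support).1, fun _ => space.mem_support.2⟩

theorem retraction_inclusion (h : IsConeDeletion K L σ w) (f : L.space) :
    h.retraction (h.inclusion f) = f := by
  obtain ⟨u, hu, hfu⟩ := Finset.not_subset.1 ((h.faces_iff _).1 f.faces_support).2
  rw [space.mem_support, not_not] at hfu
  ext v
  exact congrFun (pushOff_eq_self h.nonempty f.coord_nonneg hu hfu) v

theorem homotopyEquiv (h : IsConeDeletion K L σ w) :
    Nonempty (ContinuousMap.HomotopyEquiv K.space L.space) := by
  refine ⟨h.retraction, h.inclusion, ?_, ?_⟩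
  · refine homotopic_of_support_subset fun f => ?_
    obtain ⟨τ, hτ, hf, hτf⟩ := h.exists_support_subset f
    exact ⟨τ, hτ, fun v hv => hτf v (space.mem_support.1 hv), hf⟩
  · have hri : h.retraction.comp h.inclusion = ContinuousMap.id L.space :=
      ContinuousMap.ext h.retraction_inclusion
    exact hri ▸ ContinuousMap.Homotopic.refl _

end IsConeDeletion

/-! ### Join equivalence -/

/-- The join of two simplicial complexes. -/
def join {V W : Type} (K : Cplx V) (M : Cplx W) : Cplx (V ⊕ W) where
  faces τ := K.faces τ.toLeft ∧ M.faces τ.toRight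
  down_closed := fun _ _ h hτ =>
    ⟨K.down_closed (Finset.toLeft_subset_toLeft h) hτ.1,
      M.down_closed (Finset.toRight_subset_toRight h) hτ.2⟩

theorem faces_join {V W : Type} {K : Cplx V} {M : Cplx W} {τ : Finset (V ⊕ W)} :
    (K.join M).faces τ ↔ K.faces τ.toLeft ∧ M.faces τ.toRight := Iff.rfl

/-- Two complexes are join equivalent if their joins with any third complex are homotopy
equivalent. Unlike homotopy equivalence, this relation is evidently compatible with joins. -/
def JoinEquiv {V V' : Type} [Fintype V] [Fintype V'] (K : Cplx V) (L : Cplx V') : Prop :=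
  ∀ (W : Type) [Fintype W] (M : Cplx W),
    Nonempty (ContinuousMap.HomotopyEquiv (K.join M).space (L.join M).space)

/-- The full simplex on a vertex set. -/
def simplex (V : Type) : Cplx V := ⟨fun _ => True, fun _ _ _ h => h⟩

theorem faces_join_map_inl {V W : Type} (K : Cplx V) (L : Cplx W) (τ : Finset V) :
    (K.join L).faces (τ.map .inl) ↔ K.faces τ ∧ L.faces ∅ := by
  have hl : (τ.map (.inl : V ↪ V ⊕ W)).toLeft = τ := by ext v; simp
  have hr : (τ.map (.inl : V ↪ V ⊕ W)).toRight = ∅ := by ext v; simp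
  rw [faces_join, hl, hr]

theorem mem_range_inl {V W : Type} [IsEmpty W] (v : V ⊕ W) :
    v ∈ Set.range (Function.Embedding.inl : V ↪ V ⊕ W) := by
  obtain v | w := v
  · exact ⟨v, rfl⟩
  · exact isEmptyElim w

namespace JoinEquiv

variable {V V' V'' W : Type} [Fintype V] [Fintype V'] [Fintype V''] [Fintype W]
  {K : Cplx V} {L : Cplx V'} {P : Cplx V''}

theorem symm (h : JoinEquiv K L) : JoinEquiv L K :=
  fun W _ M => (h W M).map ContinuousMap.HomotopyEquiv.symm

theorem trans (h : JoinEquiv K L) (h' : JoinEquiv L P) : JoinEquiv K P :=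
  fun W _ M => (h W M).elim fun a => (h' W M).map a.trans

theorem of_embedding (e : V' ↪ V) (h : ∀ τ, L.faces τ ↔ K.faces (τ.map e))
    (hr : ∀ τ, K.faces τ → ∀ v ∈ τ, v ∈ Set.range e) : JoinEquiv K L := by
  refine fun W _ M => ⟨(relabel (e.sumMap (.refl W)) (fun τ => ?_) ?_).toHomotopyEquiv⟩
  · have hleft : (τ.map (e.sumMap (.refl W))).toLeft = τ.toLeft.map e := by ext v; simp
    have hright : (τ.map (e.sumMap (.refl W))).toRight = τ.toRight := by ext v; simp
    rw [faces_join, faces_join, hleft, hright, h]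
  · rintro τ hτ (v | v) hv
    · obtain ⟨u, rfl⟩ := hr _ hτ.1 v (Finset.mem_toLeft.2 hv)
      exact ⟨Sum.inl u, rfl⟩
    · exact ⟨Sum.inr v, rfl⟩

theorem of_equiv (e : V' ≃ V) (h : ∀ τ, L.faces τ ↔ K.faces (τ.map e.toEmbedding)) :
    JoinEquiv K L :=
  of_embedding e.toEmbedding h fun _ _ v _ => e.surjective v

theorem join_assoc (K : Cplx V) (L : Cplx V') (P : Cplx V'') :
    JoinEquiv ((K.join L).join P) (K.join (L.join P)) := by
  refine of_equiv (Equiv.sumAssoc V V' V'').symm fun τ => ?_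
  let τ' := τ.map (Equiv.sumAssoc V V' V'').symm.toEmbedding
  have h1 : τ'.toLeft.toLeft = τ.toLeft := by ext v; simp [τ']
  have h2 : τ'.toLeft.toRight = τ.toRight.toLeft := by ext v; simp [τ']
  have h3 : τ'.toRight = τ.toRight.toRight := by ext v; simp [τ']
  rw [faces_join, faces_join, faces_join, faces_join, h1, h2, h3, and_assoc]

theorem join_comm (K : Cplx V) (L : Cplx V') : JoinEquiv (K.join L) (L.join K) := by
  refine of_equiv (Equiv.sumComm V' V) fun τ => ?_
  have hleft : (τ.map (Equiv.sumComm V' V).toEmbedding).toLeft = τ.toRight := by ext v; simp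
  have hright : (τ.map (Equiv.sumComm V' V).toEmbedding).toRight = τ.toLeft := by ext v; simp
  rw [faces_join, faces_join, hleft, hright, and_comm]

theorem join_of_isEmpty [IsEmpty W] (K : Cplx V) (M : Cplx W) (hM : M.faces ∅) :
    JoinEquiv (K.join M) K :=
  of_embedding .inl (fun τ => by simp [faces_join_map_inl, hM]) fun _ _ v _ => mem_range_inl v

theorem homotopyEquiv (h : JoinEquiv K L) :
    Nonempty (ContinuousMap.HomotopyEquiv K.space L.space) := by
  have unit {U : Type} [Fintype U] (Q : Cplx U) :
      Nonempty ((Q.join (simplex Empty)).space ≃ₜ Q.space) :=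
    ⟨relabel .inl (fun τ => by simp [faces_join_map_inl, simplex]) fun _ _ v _ => mem_range_inl v⟩
  obtain ⟨a⟩ := unit K
  obtain ⟨b⟩ := h Empty (simplex Empty)
  obtain ⟨c⟩ := unit L
  exact ⟨(a.symm.toHomotopyEquiv.trans b).trans c.toHomotopyEquiv⟩

theorem join_right (h : JoinEquiv K L) (M : Cplx W) : JoinEquiv (K.join M) (L.join M) := by
  intro X _ N
  obtain ⟨a⟩ := (join_assoc K M N).homotopyEquiv
  obtain ⟨b⟩ := h _ (M.join N)
  obtain ⟨c⟩ := (join_assoc L M N).homotopyEquiv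
  exact ⟨(a.trans b).trans c.symm⟩

theorem join_left (h : JoinEquiv K L) (M : Cplx W) : JoinEquiv (M.join K) (M.join L) :=
  (join_comm M K).trans ((h.join_right M).trans (join_comm L M))

end JoinEquiv

theorem IsConeDeletion.join {V W : Type} [DecidableEq V] [DecidableEq W] {K L : Cplx V}
    {σ : Finset V} {w : V} (h : IsConeDeletion K L σ w) (M : Cplx W) :
    IsConeDeletion (K.join M) (L.join M) (σ.map .inl) (Sum.inl w) where
  nonempty := h.nonempty.map
  apex_notMem := by simpa using h.apex_notMem
  faces_iff τ := by
    have hsub : σ.map .inl ⊆ τ ↔ σ ⊆ τ.toLeft := by simp [Finset.subset_iff]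
    rw [hsub, faces_join, h.faces_iff, faces_join]
    exact and_right_comm
  faces_insert τ hτ hσ := by
    have hsub : σ ⊆ τ.toLeft := by simpa [Finset.subset_iff] using hσ
    have hleft : (insert (Sum.inl w) τ).toLeft = insert w τ.toLeft := by ext v; simp
    have hright : (insert (Sum.inl w) τ).toRight = τ.toRight := by ext v; simp
    rw [faces_join, hleft, hright]
    exact ⟨h.faces_insert _ hτ.1 hsub, hτ.2⟩

theorem IsConeDeletion.joinEquiv {V : Type} [Fintype V] [DecidableEq V] {K L : Cplx V}
    {σ : Finset V} {w : V} (h : IsConeDeletion K L σ w) : JoinEquiv K L := by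
  classical exact fun _ _ M => (h.join M).homotopyEquiv

/-! ### Cross-polytopes and discrete complexes -/

/-- The boundary of the cross-polytope with axes indexed by `ι`: the vertices `(i, true)` and
`(i, false)` are opposite to each other. -/
def crossPolytope (ι : Type) : Cplx (ι × Bool) where
  faces τ := ∀ i, ¬ ((i, true) ∈ τ ∧ (i, false) ∈ τ)
  down_closed := fun _ _ h hτ i hi => hτ i ⟨h hi.1, h hi.2⟩

/-- The zero-dimensional complex with vertex set `ι`. -/
def points (ι : Type) : Cplx ι where
  faces τ := ∀ i ∈ τ, ∀ j ∈ τ, i = j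
  down_closed := fun _ _ h hτ i hi j hj => hτ i (h hi) j (h hj)

theorem joinEquiv_crossPolytope_sum (ι κ : Type) [Fintype ι] [Fintype κ] :
    JoinEquiv ((crossPolytope ι).join (crossPolytope κ)) (crossPolytope (ι ⊕ κ)) :=
  .of_equiv (Equiv.sumProdDistrib ι κ Bool) fun τ => by
    simp [join, crossPolytope, Sum.forall, Equiv.sumProdDistrib]

theorem joinEquiv_crossPolytope_congr {ι κ : Type} [Fintype ι] [Fintype κ] (e : κ ≃ ι) :
    JoinEquiv (crossPolytope ι) (crossPolytope κ) := by
  refine .of_equiv (e.prodCongr (Equiv.refl Bool)) fun τ => ?_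
  have hmem (i b) : (e i, b) ∈ τ.map (e.prodCongr (Equiv.refl Bool)).toEmbedding ↔ (i, b) ∈ τ := by
    simp
  simp only [crossPolytope, e.surjective.forall, hmem]

theorem joinEquiv_crossPolytope_add (a b : ℕ) :
    JoinEquiv ((crossPolytope (Fin a)).join (crossPolytope (Fin b)))
      (crossPolytope (Fin (a + b))) :=
  (joinEquiv_crossPolytope_sum _ _).trans (joinEquiv_crossPolytope_congr finSumFinEquiv.symm)

/-! ### Complexes given by forbidden sets -/

section Avoid

variable {V : Type} {Q : Cplx V} {E E' : List (Finset V)}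

/-- The complex of all faces of `Q` containing no member of the list `E`. -/
def avoid (Q : Cplx V) (E : List (Finset V)) : Cplx V where
  faces τ := Q.faces τ ∧ ∀ e ∈ E, ¬ e ⊆ τ
  down_closed := fun _ _ h hτ =>
    ⟨Q.down_closed h hτ.1, fun e he hs => hτ.2 e he (hs.trans h)⟩

theorem avoid_mono (h : ∀ e ∈ E', ∃ e' ∈ E, e' ⊆ e) {τ : Finset V} (hτ : (avoid Q E).faces τ) :
    (avoid Q E').faces τ :=
  ⟨hτ.1, fun e he hsub => by
    obtain ⟨e', he', hsub'⟩ := h e he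
    exact hτ.2 e' he' (hsub'.trans hsub)⟩

/-- In `hE`, a minimal forbidden set through the apex has to contain a forbidden set again after `w`
is traded for `σ`. -/
theorem isConeDeletion_avoid [DecidableEq V] (σ : Finset V) (w : V) (hσ : σ.Nonempty)
    (hw : w ∉ σ) (hQ : ∀ τ, Q.faces τ → Q.faces (insert w τ))
    (hE : ∀ e ∈ E, w ∈ e → ∃ e' ∈ E, e' ⊆ σ ∪ e.erase w)
    (h : ∀ e ∈ σ :: E, ∃ e' ∈ E', e' ⊆ e) (h' : ∀ e ∈ E', ∃ e' ∈ σ :: E, e' ⊆ e) :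
    IsConeDeletion (avoid Q E) (avoid Q E') σ w where
  nonempty := hσ
  apex_notMem := hw
  faces_iff τ := by
    have hcons : (avoid Q (σ :: E)).faces τ ↔ (avoid Q E).faces τ ∧ ¬ σ ⊆ τ := by
      simp only [avoid, List.forall_mem_cons]
      tauto
    rw [← hcons]
    exact ⟨avoid_mono h, avoid_mono h'⟩
  faces_insert τ hτ hστ := by
    refine ⟨hQ τ hτ.1, fun e he hsub => ?_⟩
    by_cases hwe : w ∈ e
    · obtain ⟨e', he', hsub'⟩ := hE e he hwe
      exact hτ.2 e' he' (hsub'.trans (Finset.union_subset hστ (Finset.subset_insert_iff.1 hsub)))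
    · exact hτ.2 e he ((Finset.subset_insert_iff_of_notMem hwe).1 hsub)

/-- Four vertices `p, q, r, s` between `a, b` and `c, d` in a sequence of forbidden consecutive
triples split off as two antipodal pairs. -/
theorem joinEquiv_shorten [Fintype V] [DecidableEq V] (Q : Cplx V) (a b c d p q r s : V)
    (hQ : ∀ v ∈ ({p, q, r, s} : Finset V), ∀ τ, Q.faces τ → Q.faces (insert v τ))
    (hpq : p ≠ q) (hpr : p ≠ r) (hps : p ≠ s) (hqr : q ≠ r) (hqs : q ≠ s) (hrs : r ≠ s)
    (hdisj : Disjoint ({p, q, r, s} : Finset V) {a, b, c, d}) :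
    JoinEquiv
      (avoid Q [{a, b, p}, {b, p, q}, {p, q, r}, {q, r, s}, {r, s, c}, {s, c, d}])
      (avoid Q [{p, q}, {r, s}, {a, b, c}, {b, c, d}]) := by
  simp only [Finset.disjoint_insert_left, Finset.disjoint_singleton_left, Finset.mem_insert,
    Finset.mem_singleton, not_or] at hdisj
  simp only [Finset.forall_mem_insert, Finset.mem_singleton, forall_eq] at hQ
  obtain ⟨hp, hq, hr, hs⟩ := hQ
  have add_abc : IsConeDeletion
      (avoid Q [{a, b, p}, {b, p, q}, {p, q, r}, {q, r, s}, {r, s, c}, {s, c, d}])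
      (avoid Q [{a, b, c}, {a, b, p}, {b, p, q}, {p, q, r}, {q, r, s}, {r, s, c}, {s, c, d}])
      {a, b, c} q := by
    apply isConeDeletion_avoid _ _ (by simp) (by simp; grind) hq <;> simp [Finset.subset_iff]
    grind
  have add_bcd : IsConeDeletion
      (avoid Q [{a, b, c}, {a, b, p}, {b, p, q}, {p, q, r}, {q, r, s}, {r, s, c}, {s, c, d}])
      (avoid Q [{a, b, p}, {b, p, q}, {p, q, r}, {q, r, s}, {r, s, c}, {s, c, d}, {a, b, c},
        {b, c, d}]) {b, c, d} r := by
    apply isConeDeletion_avoid _ _ (by simp) (by simp; grind) hr <;> simp [Finset.subset_iff]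
    grind
  have drop_abp : IsConeDeletion
      (avoid Q [{b, p, q}, {p, q, r}, {q, r, s}, {r, s, c}, {s, c, d}, {a, b, c}, {b, c, d}])
      (avoid Q [{a, b, p}, {b, p, q}, {p, q, r}, {q, r, s}, {r, s, c}, {s, c, d}, {a, b, c},
        {b, c, d}]) {a, b, p} r := by
    apply isConeDeletion_avoid _ _ (by simp) (by simp; grind) hr <;> simp [Finset.subset_iff]
    grind
  have drop_scd : IsConeDeletion
      (avoid Q [{b, p, q}, {p, q, r}, {q, r, s}, {r, s, c}, {a, b, c}, {b, c, d}])
      (avoid Q [{b, p, q}, {p, q, r}, {q, r, s}, {r, s, c}, {s, c, d}, {a, b, c}, {b, c, d}])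
      {s, c, d} q := by
    apply isConeDeletion_avoid _ _ (by simp) (by simp; grind) hq <;> simp [Finset.subset_iff]
    grind
  have add_pq : IsConeDeletion
      (avoid Q [{b, p, q}, {p, q, r}, {q, r, s}, {r, s, c}, {a, b, c}, {b, c, d}])
      (avoid Q [{p, q}, {q, r, s}, {r, s, c}, {a, b, c}, {b, c, d}]) {p, q} s := by
    apply isConeDeletion_avoid _ _ (by simp) (by simp; grind) hs <;> simp [Finset.subset_iff]
    grind
  have add_rs : IsConeDeletion
      (avoid Q [{p, q}, {q, r, s}, {r, s, c}, {a, b, c}, {b, c, d}])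
      (avoid Q [{p, q}, {r, s}, {a, b, c}, {b, c, d}]) {r, s} p := by
    apply isConeDeletion_avoid _ _ (by simp) (by simp; grind) hp <;> simp [Finset.subset_iff]
    grind
  exact add_abc.joinEquiv.trans <| add_bcd.joinEquiv.trans <| drop_abp.joinEquiv.symm.trans <|
    drop_scd.joinEquiv.symm.trans <| add_pq.joinEquiv.trans add_rs.joinEquiv

end Avoid

/-! ### Dominance complexes of cycles -/

theorem ofNat_add_left (n i : ℕ) [NeZero n] : Fin.ofNat n (n + i) = Fin.ofNat n i :=
  Fin.ext (Nat.add_mod_left n i)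

/-- Three cyclically consecutive vertices, starting at `i` modulo `n`. -/
def triple (n i : ℕ) [NeZero n] : Finset (Fin n) :=
  {Fin.ofNat n i, Fin.ofNat n (i + 1), Fin.ofNat n (i + 2)}

theorem faces_domCpx_cycleGraph {n : ℕ} (τ : Finset (Fin (n + 2))) :
    (domCpx (cycleGraph (n + 2))).faces τ ↔ ∀ i < n + 2, ¬ triple (n + 2) i ⊆ τ := by
  have closed_nhd (v : Fin (n + 2)) :
      (∃ w, w ∉ τ ∧ (w = v + 1 ∨ (cycleGraph (n + 2)).Adj w (v + 1))) ↔
        ¬ (v ∈ τ ∧ v + 1 ∈ τ ∧ v + 2 ∈ τ) := by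
    have hadj (w : Fin (n + 2)) : (w = v + 1 ∨ (cycleGraph (n + 2)).Adj w (v + 1)) ↔
        w = v ∨ w = v + 1 ∨ w = v + 2 := by
      have hnext : w - (v + 1) = 1 ↔ w = v + 2 := by
        rw [sub_eq_iff_eq_add, add_comm 1, add_assoc]; rfl
      have hprev : v + 1 - w = 1 ↔ w = v := by
        rw [sub_eq_iff_eq_add, add_comm 1, add_left_inj, eq_comm]
      rw [cycleGraph_adj, hnext, hprev]
      tauto
    simp only [hadj]
    grind
  have htriple (i : ℕ) : triple (n + 2) i ⊆ τ ↔
      (Fin.ofNat (n + 2) i ∈ τ ∧ Fin.ofNat (n + 2) i + 1 ∈ τ ∧ Fin.ofNat (n + 2) i + 2 ∈ τ) := by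
    have hadd (j : ℕ) : Fin.ofNat (n + 2) (i + j) = Fin.ofNat (n + 2) i + Fin.ofNat (n + 2) j := by
      simp [Fin.ext_iff, Fin.val_add]
    simp only [triple, Finset.insert_subset_iff, Finset.singleton_subset_iff, hadd]
    rfl
  calc (∀ v, ∃ w, w ∉ τ ∧ (w = v ∨ (cycleGraph (n + 2)).Adj w v))
    _ ↔ ∀ v, ∃ w, w ∉ τ ∧ (w = v + 1 ∨ (cycleGraph (n + 2)).Adj w (v + 1)) :=
      (Equiv.addRight (1 : Fin (n + 2))).forall_congr_right.symm
    _ ↔ ∀ v : Fin (n + 2), ¬ triple (n + 2) v ⊆ τ := by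
      simp only [closed_nhd, htriple, Fin.ofNat_val_eq_self]
    _ ↔ ∀ i < n + 2, ¬ triple (n + 2) i ⊆ τ := Fin.forall_iff

/-- `Fin m` followed by two antipodal pairs, as an enumeration of `Fin (m + 4)`. -/
def appendPairs (m : ℕ) : Fin m ⊕ (Fin 2 × Bool) ≃ Fin (m + 4) :=
  (Equiv.sumCongr (Equiv.refl (Fin m))
    ((Equiv.prodCongr (Equiv.refl (Fin 2)) (finTwoEquiv.symm.trans Fin.revPerm)).trans
      finProdFinEquiv)).trans finSumFinEquiv

/-- The complex of all vertex sets of `C_{n+6}` containing none of the first `n` triples. -/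
def initialTriples (n : ℕ) : Cplx (Fin (n + 6)) where
  faces τ := ∀ i < n, ¬ triple (n + 6) i ⊆ τ
  down_closed := fun _ _ h hτ i hi hs => hτ i hi (hs.trans h)

theorem initialTriples_insert {n : ℕ} {v : Fin (n + 6)} (hv : n + 2 ≤ v)
    (τ : Finset (Fin (n + 6))) (hτ : (initialTriples n).faces τ) :
    (initialTriples n).faces (insert v τ) := by
  intro i hi hsub
  have hv' : v ∉ triple (n + 6) i := by
    simp only [triple, Fin.ofNat_eq_cast, Finset.mem_insert, Fin.ext_iff, Fin.val_natCast,
      Finset.mem_singleton, not_or]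
    rw [Nat.mod_eq_of_lt, Nat.mod_eq_of_lt, Nat.mod_eq_of_lt] <;> omega
  exact hτ i hi ((Finset.subset_insert_iff_of_notMem hv').1 hsub)

theorem joinEquiv_cycle_add_six (n : ℕ) :
    JoinEquiv (domCpx (cycleGraph (n + 6)))
      (avoid (initialTriples n) [{Fin.ofNat _ (n + 2), Fin.ofNat _ (n + 3)},
        {Fin.ofNat _ (n + 4), Fin.ofNat _ (n + 5)},
        {Fin.ofNat _ n, Fin.ofNat _ (n + 1), Fin.ofNat _ 0},
        {Fin.ofNat _ (n + 1), Fin.ofNat _ 0, Fin.ofNat _ 1}]) := by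
  refine .trans ?_ (joinEquiv_shorten _ _ _ _ _ _ _ _ _ ?_ ?_ ?_ ?_ ?_ ?_ ?_ ?_)
  · refine .of_equiv (Equiv.refl _) fun τ => ?_
    have h0 : Fin.ofNat (n + 6) (n + 6) = Fin.ofNat (n + 6) 0 := ofNat_add_left (n + 6) 0
    have h1 : Fin.ofNat (n + 6) (n + 7) = Fin.ofNat (n + 6) 1 := ofNat_add_left (n + 6) 1
    rw [Equiv.refl_toEmbedding, Finset.map_refl, faces_domCpx_cycleGraph]
    simp only [avoid, Nat.forall_lt_succ_right, and_assoc, initialTriples, triple, h0, h1,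
      List.forall_mem_cons, List.not_mem_nil, false_implies, implies_true, and_true, add_assoc,
      Nat.reduceAdd]
  · simp only [Finset.forall_mem_insert, Finset.mem_singleton, forall_eq]
    refine ⟨?_, ?_, ?_, ?_⟩ <;>
      exact initialTriples_insert (by simp [Nat.mod_eq_of_lt])
  all_goals simp [Fin.ext_iff, Nat.mod_eq_of_lt]

theorem joinEquiv_cycle_add_four (n : ℕ) :
    JoinEquiv (domCpx (cycleGraph (n + 2 + 4)))
      ((domCpx (cycleGraph (n + 2))).join (crossPolytope (Fin 2))) := by
  refine (joinEquiv_cycle_add_six n).trans (.of_equiv (appendPairs (n + 2)) fun τ => ?_)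
  have mem_left {i : ℕ} (hi : i < n + 2) : Fin.ofNat (n + 6) i ∈
      τ.map (appendPairs (n + 2)).toEmbedding ↔ Fin.ofNat (n + 2) i ∈ τ.toLeft := by
    have hval : Fin.ofNat (n + 6) i = appendPairs (n + 2) (Sum.inl (Fin.ofNat (n + 2) i)) :=
      Fin.ext <| (Nat.mod_eq_of_lt (by omega)).trans (Nat.mod_eq_of_lt hi).symm
    rw [hval, Finset.mem_map_equiv, Equiv.symm_apply_apply, Finset.mem_toLeft]
  have mem_right (i : Fin 2) (b : Bool) : appendPairs (n + 2) (Sum.inr (i, b)) ∈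
      τ.map (appendPairs (n + 2)).toEmbedding ↔ (i, b) ∈ τ.toRight := by
    rw [Finset.mem_map_equiv, Equiv.symm_apply_apply, Finset.mem_toRight]
  have hp : Fin.ofNat (n + 6) (n + 2) = appendPairs (n + 2) (Sum.inr (0, true)) :=
    Fin.ext (Nat.mod_eq_of_lt (by omega))
  have hq : Fin.ofNat (n + 6) (n + 3) = appendPairs (n + 2) (Sum.inr (0, false)) :=
    Fin.ext (Nat.mod_eq_of_lt (by omega))
  have hr : Fin.ofNat (n + 6) (n + 4) = appendPairs (n + 2) (Sum.inr (1, true)) :=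
    Fin.ext (Nat.mod_eq_of_lt (by omega))
  have hs : Fin.ofNat (n + 6) (n + 5) = appendPairs (n + 2) (Sum.inr (1, false)) :=
    Fin.ext (Nat.mod_eq_of_lt (by omega))
  have h0 : Fin.ofNat (n + 2) (n + 2) = Fin.ofNat (n + 2) 0 := ofNat_add_left (n + 2) 0
  have h1 : Fin.ofNat (n + 2) (n + 3) = Fin.ofNat (n + 2) 1 := ofNat_add_left (n + 2) 1
  have initial : (initialTriples n).faces (τ.map (appendPairs (n + 2)).toEmbedding) ↔
      ∀ i < n, ¬ triple (n + 2) i ⊆ τ.toLeft := by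
    refine forall₂_congr fun i hi => ?_
    simp only [triple, Finset.insert_subset_iff, Finset.singleton_subset_iff]
    rw [mem_left (by omega), mem_left (by omega), mem_left (by omega)]
  simp only [avoid, initial, faces_join, faces_domCpx_cycleGraph, crossPolytope, triple,
    Nat.forall_lt_succ_right, Fin.forall_fin_two, List.forall_mem_cons, List.not_mem_nil,
    false_implies, implies_true, and_true, Finset.insert_subset_iff, Finset.singleton_subset_iff,
    hp, hq, hr, hs, mem_right, add_assoc, Nat.reduceAdd, h0, h1]
  rw [mem_left (by omega), mem_left (by omega), mem_left (by omega), mem_left (by omega)]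
  tauto

theorem joinEquiv_cycle_five :
    JoinEquiv (domCpx (cycleGraph 5)) ((domCpx (cycleGraph 1)).join (crossPolytope (Fin 2))) := by
  have cycle_eq_avoid : JoinEquiv (domCpx (cycleGraph 5)) (avoid (simplex (Fin 5))
      [{0, 1, 2}, {1, 2, 3}, {2, 3, 4}, {3, 4, 0}, {4, 0, 1}]) := by
    refine .of_equiv (Equiv.refl _) fun τ => ?_
    rw [Equiv.refl_toEmbedding, Finset.map_refl]
    revert τ
    simp only [avoid, simplex, domCpx, true_and]
    decide
  have add_last_first : IsConeDeletion
      (avoid (simplex (Fin 5)) [{0, 1, 2}, {1, 2, 3}, {2, 3, 4}, {3, 4, 0}, {4, 0, 1}])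
      (avoid (simplex (Fin 5)) [{4, 0}, {0, 1, 2}, {1, 2, 3}, {2, 3, 4}]) {4, 0} 2 := by
    apply isConeDeletion_avoid _ _ (by simp) (by decide) (fun _ => id) <;> decide
  have add_first_second : IsConeDeletion
      (avoid (simplex (Fin 5)) [{4, 0}, {0, 1, 2}, {1, 2, 3}, {2, 3, 4}])
      (avoid (simplex (Fin 5)) [{0, 0, 1}, {0, 1, 2}, {1, 2, 3}, {2, 3, 4}, {3, 4, 0}, {4, 0, 0}])
      {0, 1} 3 := by
    apply isConeDeletion_avoid _ _ (by simp) (by decide) (fun _ => id) <;> decide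
  have shorten := joinEquiv_shorten (simplex (Fin 5)) 0 0 0 0 1 2 3 4 (fun _ _ _ => id)
    (by decide) (by decide) (by decide) (by decide) (by decide) (by decide) (by decide)
  refine cycle_eq_avoid.trans <| add_last_first.joinEquiv.trans <|
    add_first_second.joinEquiv.trans <| shorten.trans ?_
  refine .of_equiv (appendPairs 1) ?_
  simp only [avoid, simplex, join, domCpx, crossPolytope, true_and]
  decide

theorem joinEquiv_cycle_add_four_mul {m : ℕ} (hm : 1 ≤ m) (k : ℕ) :
    JoinEquiv (domCpx (cycleGraph (4 * k + m)))
      ((domCpx (cycleGraph m)).join (crossPolytope (Fin (2 * k)))) := by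
  induction k with
  | zero =>
    rw [show 4 * 0 + m = m by omega, mul_zero]
    exact (JoinEquiv.join_of_isEmpty _ (crossPolytope (Fin 0)) fun i => i.elim0).symm
  | succ k ih =>
    have shorten : JoinEquiv (domCpx (cycleGraph (4 * k + m + 4)))
        ((domCpx (cycleGraph (4 * k + m))).join (crossPolytope (Fin 2))) := by
      rcases h : 4 * k + m with _ | _ | n
      · omega
      · exact joinEquiv_cycle_five
      · exact joinEquiv_cycle_add_four n
    rw [show 4 * (k + 1) + m = 4 * k + m + 4 by omega]
    exact shorten.trans <| (ih.join_right _).trans <| (JoinEquiv.join_assoc _ _ _).trans <|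
      (joinEquiv_crossPolytope_add (2 * k) 2).join_left _

/-! ### Dominance complexes of complete graphs -/

theorem faces_domCpx_top {V : Type} [Fintype V] [DecidableEq V] [Nonempty V] (τ : Finset V) :
    (domCpx (⊤ : SimpleGraph V)).faces τ ↔ τ ≠ Finset.univ := by
  simp [domCpx, Finset.eq_univ_iff_forall, eq_or_ne]

/-- The cone over the boundary of `A` with apex `x`, closed up by the facet `A`, is the suspension
of the boundary of `A` with suspension points `x` and `y`. -/
theorem joinEquiv_avoid_suspension {V : Type} [Fintype V] [DecidableEq V] {A : Finset V} {x y : V}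
    (hA : A.Nonempty) (hx : x ∉ A) (hy : y ∉ A) (hxy : x ≠ y) :
    JoinEquiv (avoid (simplex V) [{y}, insert x A]) (avoid (simplex V) [{x, y}, A]) := by
  obtain ⟨v, hv⟩ := hA
  have delete_vertex : IsConeDeletion (avoid (simplex V) [{x, y}, insert x A])
      (avoid (simplex V) [{y}, insert x A]) {y} v := by
    apply isConeDeletion_avoid _ _ (by simp) (by grind) (fun _ => id) <;> simp [Finset.subset_iff]
    all_goals grind
  have delete_facet : IsConeDeletion (avoid (simplex V) [{x, y}, insert x A])
      (avoid (simplex V) [{x, y}, A]) A y := by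
    apply isConeDeletion_avoid _ _ ⟨v, hv⟩ hy (fun _ => id) <;> simp [Finset.subset_iff]
    all_goals grind
  exact delete_vertex.joinEquiv.symm.trans delete_facet.joinEquiv

theorem joinEquiv_domCpx_top_option (V : Type) [Fintype V] [DecidableEq V] [Nonempty V] :
    JoinEquiv (domCpx (⊤ : SimpleGraph (Option V)))
      ((domCpx (⊤ : SimpleGraph V)).join (crossPolytope (Fin 1))) := by
  let x : V ⊕ Fin 1 × Bool := .inr (0, true)
  let y : V ⊕ Fin 1 × Bool := .inr (0, false)
  let A : Finset (V ⊕ Fin 1 × Bool) := Finset.univ.map .inl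
  have boundary : JoinEquiv (avoid (simplex _) [{y}, insert x A])
      (domCpx (⊤ : SimpleGraph (Option V))) := by
    let e : Option V ↪ V ⊕ Fin 1 × Bool := .optionElim .inl x (by simp [x])
    refine .of_embedding e (fun τ => ?_) ?_
    · have hx : x ∈ τ.map e ↔ none ∈ τ := Finset.mem_map' (a := none) e
      have hy : y ∉ τ.map e := by
        rw [Finset.mem_map]
        rintro ⟨_ | v, -, h⟩ <;> simp [e, x, y] at h
      have hA : A ⊆ τ.map e ↔ ∀ v, some v ∈ τ := by
        simp only [A, Finset.subset_iff, Finset.forall_mem_map, Finset.mem_univ, true_imp_iff]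
        exact forall_congr' fun v => Finset.mem_map' (a := some v) e
      simp only [faces_domCpx_top, avoid, simplex, List.forall_mem_cons, List.not_mem_nil,
        false_implies, implies_true, Finset.singleton_subset_iff, Finset.insert_subset_iff, hx, hy,
        hA, ne_eq, Finset.eq_univ_iff_forall, Option.forall, not_false_eq_true, true_and, and_true]
    · rintro τ hτ (v | ⟨i, _ | _⟩) hv
      · exact ⟨some v, rfl⟩
      · exact absurd (by simpa [y, Subsingleton.elim i 0] using hv) (hτ.2 {y} (by simp))
      · exact ⟨none, congrArg (fun i => Sum.inr (i, true)) (Subsingleton.elim 0 i)⟩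
  refine boundary.symm.trans <| (joinEquiv_avoid_suspension (Finset.univ_nonempty.map) (by simp [x])
    (by simp [y]) (by simp [x, y])).trans <| .of_equiv (Equiv.refl _) fun τ => ?_
  simp [faces_domCpx_top, faces_join, crossPolytope, avoid, simplex, Finset.subset_iff, x, y,
    Finset.eq_univ_iff_forall, and_comm]

theorem joinEquiv_domCpx_top (n : ℕ) :
    JoinEquiv (domCpx (⊤ : SimpleGraph (Fin (n + 1)))) (crossPolytope (Fin n)) := by
  induction n with
  | zero =>
    have : Subsingleton (Fin (0 + 1)) := inferInstanceAs (Subsingleton (Fin 1))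
    refine .of_embedding ⟨fun x => x.1.elim0, fun x => x.1.elim0⟩ (fun τ => ?_) fun τ hτ v hv => ?_
    · simp [Subsingleton.elim τ ∅, crossPolytope, domCpx]
    · obtain ⟨w, hw, -⟩ := hτ v
      exact absurd (Subsingleton.elim v w ▸ hv) hw
  | succ n ih =>
    have option : JoinEquiv (domCpx (⊤ : SimpleGraph (Fin (n + 2))))
        (domCpx (⊤ : SimpleGraph (Option (Fin (n + 1))))) :=
      .of_equiv (finSuccEquiv (n + 1)).symm fun τ => by
        rw [faces_domCpx_top, faces_domCpx_top, Ne, Ne,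
          ← Finset.map_univ_equiv (finSuccEquiv (n + 1)).symm, Finset.map_inj]
    exact option.trans <| (joinEquiv_domCpx_top_option _).trans <| (ih.join_right _).trans <|
      joinEquiv_crossPolytope_add n 1

/-! ### The dominance complex of the four-cycle -/

/-- The complex generated by the sets in the list `F`. -/
def ofFacets {V : Type} (F : List (Finset V)) : Cplx V where
  faces τ := ∃ φ ∈ F, τ ⊆ φ
  down_closed := fun _ _ h ⟨φ, hφ, hτ⟩ => ⟨φ, hφ, h.trans hτ⟩

instance {V : Type} [DecidableEq V] (F : List (Finset V)) : DecidablePred (ofFacets F).faces :=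
  fun τ => inferInstanceAs (Decidable (∃ φ ∈ F, τ ⊆ φ))

instance {V : Type} [Fintype V] [DecidableEq V] (F G : List (Finset V)) (σ : Finset V) (w : V) :
    Decidable (IsConeDeletion (ofFacets F) (ofFacets G) σ w) :=
  decidable_of_iff (σ.Nonempty ∧ w ∉ σ ∧
      (∀ τ, (ofFacets G).faces τ ↔ (ofFacets F).faces τ ∧ ¬ σ ⊆ τ) ∧
      ∀ τ, (ofFacets F).faces τ → σ ⊆ τ → (ofFacets F).faces (insert w τ))
    ⟨fun ⟨h₁, h₂, h₃, h₄⟩ => ⟨h₁, h₂, h₃, h₄⟩,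
      fun h => ⟨h.nonempty, h.apex_notMem, h.faces_iff, h.faces_insert⟩⟩

theorem joinEquiv_ofFacets_of_isConeDeletion {V : Type} [Fintype V] [DecidableEq V]
    {F G : List (Finset V)} (H : List (Finset V)) (σ τ : Finset V) (v w : V)
    (h : IsConeDeletion (ofFacets H) (ofFacets F) σ v)
    (h' : IsConeDeletion (ofFacets H) (ofFacets G) τ w) :
    JoinEquiv (ofFacets F) (ofFacets G) :=
  h.joinEquiv.symm.trans h'.joinEquiv

/-- Two edges of `K_4` are subdivided by the vertices `4` and `5`, and the edges at `5` slid over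
to `0` and `1`, which turns the graph into `K_{2,4}`. -/
theorem joinEquiv_complete_four_bipartite : JoinEquiv
    (ofFacets (V := Fin 6) [{0, 2}, {0, 3}, {1, 2}, {1, 3}, {0, 1}, {2, 3}])
    (ofFacets (V := Fin 6) [{0, 2}, {0, 3}, {1, 2}, {1, 3}, {0, 4}, {1, 4}, {0, 5}, {1, 5}]) := by
  have subdivide_01 : JoinEquiv
      (ofFacets (V := Fin 6) [{0, 2}, {0, 3}, {1, 2}, {1, 3}, {0, 1}, {2, 3}])
      (ofFacets (V := Fin 6) [{0, 2}, {0, 3}, {1, 2}, {1, 3}, {0, 4}, {1, 4}, {2, 3}]) :=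
    joinEquiv_ofFacets_of_isConeDeletion
      [{0, 2}, {0, 3}, {1, 2}, {1, 3}, {0, 1, 4}, {2, 3}] {4} {0, 1} 0 4 (by decide) (by decide)
  have subdivide_23 : JoinEquiv
      (ofFacets (V := Fin 6) [{0, 2}, {0, 3}, {1, 2}, {1, 3}, {0, 4}, {1, 4}, {2, 3}])
      (ofFacets (V := Fin 6) [{0, 2}, {0, 3}, {1, 2}, {1, 3}, {0, 4}, {1, 4}, {2, 5}, {3, 5}]) :=
    joinEquiv_ofFacets_of_isConeDeletion
      [{0, 2}, {0, 3}, {1, 2}, {1, 3}, {0, 4}, {1, 4}, {2, 3, 5}] {5} {2, 3} 2 5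
      (by decide) (by decide)
  have slide_25 : JoinEquiv
      (ofFacets (V := Fin 6) [{0, 2}, {0, 3}, {1, 2}, {1, 3}, {0, 4}, {1, 4}, {2, 5}, {3, 5}])
      (ofFacets (V := Fin 6) [{0, 2}, {0, 3}, {1, 2}, {1, 3}, {0, 4}, {1, 4}, {0, 5}, {3, 5}]) :=
    joinEquiv_ofFacets_of_isConeDeletion
      [{0, 2, 5}, {0, 3}, {1, 2}, {1, 3}, {0, 4}, {1, 4}, {3, 5}] {0, 5} {2, 5} 2 0
      (by decide) (by decide)
  have slide_35 : JoinEquiv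
      (ofFacets (V := Fin 6) [{0, 2}, {0, 3}, {1, 2}, {1, 3}, {0, 4}, {1, 4}, {0, 5}, {3, 5}])
      (ofFacets (V := Fin 6) [{0, 2}, {0, 3}, {1, 2}, {1, 3}, {0, 4}, {1, 4}, {0, 5}, {1, 5}]) :=
    joinEquiv_ofFacets_of_isConeDeletion
      [{0, 2}, {0, 3}, {1, 2}, {1, 3, 5}, {0, 4}, {1, 4}, {0, 5}] {1, 5} {3, 5} 3 1
      (by decide) (by decide)
  exact subdivide_01.trans <| subdivide_23.trans <| slide_25.trans slide_35

/-- A face of `D(C_4)` misses at least two vertices, so `D(C_4)` is the graph `K_4`. -/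
theorem joinEquiv_cycle_four : JoinEquiv (domCpx (cycleGraph 4))
    ((points (Option (Fin 3))).join (crossPolytope (Fin 1))) := by
  have complete : JoinEquiv
      (ofFacets (V := Fin 6) [{0, 2}, {0, 3}, {1, 2}, {1, 3}, {0, 1}, {2, 3}])
      (domCpx (cycleGraph 4)) := by
    refine .of_embedding (Fin.castLEEmb (by norm_num)) ?_ ?_
    · simp only [domCpx]
      decide
    · simp only [Set.mem_range]
      decide
  refine complete.symm.trans <| joinEquiv_complete_four_bipartite.trans <| .of_equiv
    (Equiv.ofBijective (Sum.elim (fun o => o.elim 2 fun i => Fin.natAdd 3 i)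
      fun x => if x.2 then 0 else 1) (by decide)) ?_
  simp only [join, points, crossPolytope]
  decide

theorem joinEquiv_cycle_crossPolytope {j : ℕ} (hj : j ≤ 2) (k : ℕ) :
    JoinEquiv (domCpx (cycleGraph (4 * k + (j + 1)))) (crossPolytope (Fin (j + 2 * k))) := by
  have base : JoinEquiv (domCpx (cycleGraph (j + 1))) (crossPolytope (Fin j)) := by
    have complete : cycleGraph (j + 1) = ⊤ := by
      interval_cases j
      exacts [cycleGraph_one_eq_top, cycleGraph_two_eq_top, cycleGraph_three_eq_top]
    rw [complete]
    exact joinEquiv_domCpx_top j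
  exact (joinEquiv_cycle_add_four_mul (Nat.le_add_left 1 j) k).trans <|
    (base.join_right _).trans <| joinEquiv_crossPolytope_add j (2 * k)

theorem joinEquiv_cycle_points (k : ℕ) :
    JoinEquiv (domCpx (cycleGraph (4 * k + 4)))
      ((points (Option (Fin 3))).join (crossPolytope (Fin (1 + 2 * k)))) :=
  (joinEquiv_cycle_add_four_mul (by norm_num) k).trans <|
    (joinEquiv_cycle_four.join_right _).trans <|
    (JoinEquiv.join_assoc _ _ _).trans <| (joinEquiv_crossPolytope_add 1 (2 * k)).join_left _

/-! ### The boundary of the cross-polytope is a sphere -/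

theorem continuous_normalize {X E : Type*} [TopologicalSpace X] [NormedAddCommGroup E]
    [NormedSpace ℝ E] {g : X → E} (hg : Continuous g) (h0 : ∀ x, g x ≠ 0) :
    Continuous fun x => NormedSpace.normalize (g x) :=
  (hg.norm.inv₀ fun x => norm_ne_zero_iff.2 (h0 x)).smul hg

section Sphere

variable {ι : Type}

/-- The positive and negative parts of the coordinates of a vector, indexed by the vertices of the
cross-polytope. -/
noncomputable def signedParts (x : EuclideanSpace ℝ ι) (p : ι × Bool) : ℝ :=
  if p.2 then (x p.1)⁺ else (x p.1)⁻

theorem signedParts_nonneg (x : EuclideanSpace ℝ ι) (p : ι × Bool) : 0 ≤ signedParts x p := by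
  rw [signedParts]
  split_ifs
  exacts [posPart_nonneg _, negPart_nonneg _]

theorem signedParts_smul {c : ℝ} (hc : 0 ≤ c) (x : EuclideanSpace ℝ ι) (p : ι × Bool) :
    signedParts (c • x) p = c * signedParts x p := by
  simp [signedParts, posPart_def, negPart_def, mul_max_of_nonneg, hc]

@[fun_prop]
theorem continuous_signedParts (p : ι × Bool) :
    Continuous fun x : EuclideanSpace ℝ ι => signedParts x p := by
  obtain ⟨i, _ | _⟩ := p
  · exact continuous_negPart.comp (EuclideanSpace.proj i).continuous
  · exact continuous_posPart.comp (EuclideanSpace.proj i).continuous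

variable [Fintype ι]

theorem sum_signedParts_pos {x : EuclideanSpace ℝ ι} (hx : x ≠ 0) : 0 < ∑ p, signedParts x p := by
  refine (Finset.sum_nonneg fun p _ => signedParts_nonneg x p).lt_of_ne' fun hsum => hx ?_
  have hzero := (Fintype.sum_eq_zero_iff_of_nonneg (signedParts_nonneg x)).1 hsum
  ext i
  have hpos : (x i)⁺ = 0 := congrFun hzero (i, true)
  have hneg : (x i)⁻ = 0 := congrFun hzero (i, false)
  simpa [hpos, hneg] using (posPart_sub_negPart (x i)).symm

/-- The point of `EuclideanSpace ℝ ι` with barycentric coordinates `f` with respect to the vertices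
`± eᵢ` of the cross-polytope. -/
noncomputable def signedVector (f : (crossPolytope ι).space) : EuclideanSpace ℝ ι :=
  WithLp.toLp 2 fun i => f.coord (i, true) - f.coord (i, false)

theorem continuous_signedVector :
    Continuous (signedVector : (crossPolytope ι).space → EuclideanSpace ℝ ι) :=
  (PiLp.continuous_toLp 2 _).comp (by fun_prop)

theorem signedParts_signedVector (f : (crossPolytope ι).space) (p : ι × Bool) :
    signedParts (signedVector f) p = f.coord p := by
  obtain ⟨i, b⟩ := p
  have hface : f.coord (i, true) = 0 ∨ f.coord (i, false) = 0 := by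
    by_contra! h
    exact f.faces_support i ⟨space.mem_support.2 h.1, space.mem_support.2 h.2⟩
  have htrue := f.coord_nonneg (i, true)
  have hfalse := f.coord_nonneg (i, false)
  cases b <;> obtain h | h := hface <;> simp [signedParts, signedVector, h, htrue, hfalse]

theorem signedVector_ne_zero (f : (crossPolytope ι).space) : signedVector f ≠ 0 := by
  intro h
  have hsum := f.sum_coord
  simp [← signedParts_signedVector, h, signedParts] at hsum

/-- The inverse of the radial projection of the boundary of the cross-polytope to the sphere. -/
noncomputable def sphereToCrossPolytope :
    C(Metric.sphere (0 : EuclideanSpace ℝ ι) 1, (crossPolytope ι).space) :=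
  mkMap (crossPolytope ι) (fun x p => signedParts x.1 p / ∑ q, signedParts x.1 q)
    (fun p => Continuous.div (by fun_prop) (by fun_prop) fun x =>
      (sum_signedParts_pos (Metric.ne_of_mem_sphere x.2 one_ne_zero)).ne')
    (fun x => by rw [← Finset.sum_div,
      div_self (sum_signedParts_pos (Metric.ne_of_mem_sphere x.2 one_ne_zero)).ne'])
    (fun x p => div_nonneg (signedParts_nonneg _ _)
      (Finset.sum_nonneg fun q _ => signedParts_nonneg _ q))
    fun x => ⟨Finset.univ.filter fun p => 0 < signedParts x.1 p,
      fun i => by simpa [signedParts] using le_of_lt,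
      fun p hp => by
        simpa using (signedParts_nonneg x.1 p).lt_of_ne' (left_ne_zero_of_mul hp)⟩

theorem signedVector_sphereToCrossPolytope (x : Metric.sphere (0 : EuclideanSpace ℝ ι) 1) :
    signedVector (sphereToCrossPolytope x) = (∑ p, signedParts x.1 p)⁻¹ • x.1 := by
  ext i
  have hparts : signedParts x.1 (i, true) - signedParts x.1 (i, false) = x.1 i :=
    posPart_sub_negPart _
  simp [signedVector, sphereToCrossPolytope, div_eq_inv_mul, ← mul_sub, hparts]

variable (ι) in
/-- Radial projection of the boundary of the cross-polytope. -/
noncomputable def crossPolytopeHomeoSphere :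
    (crossPolytope ι).space ≃ₜ Metric.sphere (0 : EuclideanSpace ℝ ι) 1 where
  toFun f := ⟨NormedSpace.normalize (signedVector f), by simpa using signedVector_ne_zero f⟩
  invFun := sphereToCrossPolytope
  left_inv f := by
    ext p
    have hc : 0 < ‖signedVector f‖⁻¹ := inv_pos.2 (norm_pos_iff.2 (signedVector_ne_zero f))
    simp only [sphereToCrossPolytope, coord_mkMap, NormedSpace.normalize, signedParts_smul hc.le,
      signedParts_signedVector, ← Finset.mul_sum, f.sum_coord, mul_one]
    exact mul_div_cancel_left₀ _ hc.ne'
  right_inv x := by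
    apply Subtype.ext
    have hsum : 0 < ∑ p, signedParts x.1 p :=
      sum_signedParts_pos (Metric.ne_of_mem_sphere x.2 one_ne_zero)
    change NormedSpace.normalize (signedVector (sphereToCrossPolytope x)) = x.1
    rw [signedVector_sphereToCrossPolytope, NormedSpace.normalize_smul_of_pos (inv_pos.2 hsum),
      NormedSpace.normalize_eq_self_of_norm_eq_one (norm_eq_of_mem_sphere x)]
  continuous_toFun := by
    exact (continuous_normalize continuous_signedVector signedVector_ne_zero).subtype_mk _
  continuous_invFun := ContinuousMap.continuous sphereToCrossPolytope

theorem nonneg_crossPolytopeHomeoSphere_iff (f : (crossPolytope ι).space) (i : ι) :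
    0 ≤ (crossPolytopeHomeoSphere ι f).1 i ↔ f.coord (i, false) = 0 := by
  have hpos : 0 < ‖signedVector f‖⁻¹ := inv_pos.2 (norm_pos_iff.2 (signedVector_ne_zero f))
  calc 0 ≤ ‖signedVector f‖⁻¹ * signedVector f i
    _ ↔ 0 ≤ signedVector f i := mul_nonneg_iff_of_pos_left hpos
    _ ↔ signedParts (signedVector f) (i, false) = 0 := negPart_eq_zero.symm
    _ ↔ f.coord (i, false) = 0 := by rw [signedParts_signedVector]

end Sphere

/-! ### Contracting the upper hemisphere -/

section Hemisphere

open scoped unitInterval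

variable {E : Type*} [NormedAddCommGroup E] [InnerProductSpace ℝ E]
  {e x : Metric.sphere (0 : E) 1} {t : I}

/-- The weight of the pole `e` at time `t` in the motion of `x` towards `e`. The points of the upper
hemisphere arrive at time one, while the antipode of `e` stays fixed. -/
noncomputable def poleWeight (e x : Metric.sphere (0 : E) 1) (t : I) : ℝ :=
  t * (1 - (inner ℝ e.1 x.1)⁻)

theorem poleWeight_mem_unitInterval (e x : Metric.sphere (0 : E) 1) (t : I) :
    poleWeight e x t ∈ I := by
  have habs := abs_real_inner_le_norm e.1 x.1
  rw [norm_eq_of_mem_sphere, norm_eq_of_mem_sphere, mul_one] at habs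
  have hle : (inner ℝ e.1 x.1)⁻ ≤ 1 := sup_le ((neg_le_abs _).trans habs) zero_le_one
  exact unitInterval.mul_mem t.2 ⟨sub_nonneg.2 hle, sub_le_self _ (negPart_nonneg _)⟩

theorem poleWeight_of_inner_nonneg (h : 0 ≤ inner ℝ e.1 x.1) (t : I) : poleWeight e x t = t := by
  rw [poleWeight, negPart_of_nonneg h, sub_zero, mul_one]

theorem continuous_lineMap_poleWeight (e : Metric.sphere (0 : E) 1) :
    Continuous fun p : Metric.sphere (0 : E) 1 × I =>
      AffineMap.lineMap p.1.1 e.1 (poleWeight e p.1 p.2) := by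
  have hneg : Continuous fun p : Metric.sphere (0 : E) 1 × I => (inner ℝ e.1 p.1.1)⁻ :=
    continuous_negPart.comp (by fun_prop)
  exact .lineMap (by fun_prop) continuous_const
    ((continuous_subtype_val.comp continuous_snd).mul (continuous_const.sub hneg))

theorem lineMap_poleWeight_ne_zero (e x : Metric.sphere (0 : E) 1) (t : I) :
    AffineMap.lineMap x.1 e.1 (poleWeight e x t) ≠ 0 := by
  intro h
  obtain ⟨h0, h1⟩ := poleWeight_mem_unitInterval e x t
  rw [AffineMap.lineMap_apply_module, add_eq_zero_iff_eq_neg] at h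
  have hhalf : poleWeight e x t = 1 / 2 := by
    have hnorm := congrArg norm h
    rw [norm_neg, norm_smul_of_nonneg (sub_nonneg.2 h1), norm_smul_of_nonneg h0,
      norm_eq_of_mem_sphere, norm_eq_of_mem_sphere] at hnorm
    linarith
  have hantipode : x.1 = -e.1 := by
    rw [hhalf, ← smul_neg, show (1 - 1 / 2 : ℝ) = 1 / 2 by norm_num] at h
    exact smul_right_injective E (by norm_num) h
  have hzero : poleWeight e x t = 0 := by
    simp [poleWeight, hantipode]
  norm_num [hzero] at hhalf

/-- A deformation of the unit sphere that fixes `e` and contracts the closed hemisphere around `e`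
to `e`. -/
noncomputable def hemisphereContraction (e : Metric.sphere (0 : E) 1) :
    C(Metric.sphere (0 : E) 1 × I, Metric.sphere (0 : E) 1) where
  toFun p := ⟨NormedSpace.normalize (AffineMap.lineMap p.1.1 e.1 (poleWeight e p.1 p.2)), by
    simpa using lineMap_poleWeight_ne_zero e p.1 p.2⟩
  continuous_toFun := by
    exact (continuous_normalize (continuous_lineMap_poleWeight e) fun p =>
      lineMap_poleWeight_ne_zero e p.1 p.2).subtype_mk _

theorem hemisphereContraction_zero (e x : Metric.sphere (0 : E) 1) :
    hemisphereContraction e (x, 0) = x := by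
  apply Subtype.ext
  simp [hemisphereContraction, poleWeight, NormedSpace.normalize]

theorem hemisphereContraction_one (h : 0 ≤ inner ℝ e.1 x.1) :
    hemisphereContraction e (x, 1) = e := by
  apply Subtype.ext
  simp [hemisphereContraction, poleWeight_of_inner_nonneg h, NormedSpace.normalize]

theorem hemisphereContraction_pole (e : Metric.sphere (0 : E) 1) (t : I) :
    hemisphereContraction e (e, t) = e := by
  apply Subtype.ext
  simp [hemisphereContraction, NormedSpace.normalize]

theorem inner_hemisphereContraction_nonneg (h : 0 ≤ inner ℝ e.1 x.1) (t : I) :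
    0 ≤ inner ℝ e.1 (hemisphereContraction e (x, t)).1 := by
  have hline : 0 ≤ inner ℝ e.1 (AffineMap.lineMap x.1 e.1 (t : ℝ)) := by
    rw [AffineMap.lineMap_apply_module, inner_add_right, real_inner_smul_right,
      real_inner_smul_right]
    have := t.2.1
    have := sub_nonneg.2 t.2.2
    have : 0 ≤ inner ℝ e.1 e.1 := real_inner_self_nonneg
    positivity
  simp only [hemisphereContraction, ContinuousMap.coe_mk, poleWeight_of_inner_nonneg h,
    NormedSpace.normalize, real_inner_smul_right]
  positivity

end Hemisphere

open Topology
open scoped unitInterval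

/-! ### Wedges of spheres -/

section QuotientMap

variable {Q X Y : Type*} [TopologicalSpace Q] [TopologicalSpace X] [TopologicalSpace Y]
  {p : C(Q, X)} {q : C(Q, Y)} {c : C(Q × I, Q)}

theorem homotopic_id_of_isQuotientMap (hp : IsQuotientMap p) (hc : ∀ a, c (a, 0) = a)
    (hpc : ∀ a b t, p a = p b → p (c (a, t)) = p (c (b, t))) {f : C(X, X)}
    (hf : ∀ a, f (p a) = p (c (a, 1))) : f.Homotopic (.id X) := by
  have hfac : Function.FactorsThrough (p.comp c).curry p := fun a b hab =>
    ContinuousMap.ext fun t => hpc a b t hab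
  let G : C(X, C(I, X)) := hp.lift (p.comp c).curry hfac
  have hG (a : Q) (t : I) : G (p a) t = p (c (a, t)) :=
    DFunLike.congr_fun (DFunLike.congr_fun (hp.lift_comp _ hfac) a) t
  refine .symm ⟨⟨⟨fun y => G y.2 y.1, by fun_prop⟩, fun x => ?_, fun x => ?_⟩⟩
  · obtain ⟨a, rfl⟩ := hp.surjective x
    exact (hG a 0).trans (congrArg p (hc a))
  · obtain ⟨a, rfl⟩ := hp.surjective x
    exact (hG a 1).trans (hf a).symm

theorem homotopyEquiv_of_isQuotientMap (hp : IsQuotientMap p) (hq : IsQuotientMap q)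
    (hc : ∀ a, c (a, 0) = a) (hqp : ∀ a b, q a = q b → p a = p b)
    (hpc : ∀ a b t, p a = p b → p (c (a, t)) = p (c (b, t)))
    (hqc : ∀ a b t, q a = q b → q (c (a, t)) = q (c (b, t)))
    (hpq : ∀ a b, p a = p b → q (c (a, 1)) = q (c (b, 1))) :
    Nonempty (ContinuousMap.HomotopyEquiv X Y) := by
  let c₁ : C(Q, Q) := c.comp ((ContinuousMap.id Q).prodMk (.const Q 1))
  let f : C(X, Y) := hp.lift (q.comp c₁) fun a b => hpq a b
  let g : C(Y, X) := hq.lift p fun a b => hqp a b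
  have hf (a : Q) : f (p a) = q (c (a, 1)) :=
    DFunLike.congr_fun (hp.lift_comp (q.comp c₁) fun a b => hpq a b) a
  have hg (a : Q) : g (q a) = p a := DFunLike.congr_fun (hq.lift_comp p fun a b => hqp a b) a
  exact ⟨f, g,
    homotopic_id_of_isQuotientMap hp hc hpc fun a => by simp [hf, hg],
    homotopic_id_of_isQuotientMap hq hc hqc fun a => by simp [hf, hg]⟩

end QuotientMap

section Wedge

variable {c : ℕ → ℕ} {d : ℕ}

/-- The map from the disjoint union of the `d`-dimensional spheres to the wedge. -/
def wedgeProj (c : ℕ → ℕ) (d : ℕ) : C(Fin (c d) × sph d, sphereWedge c) where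
  toFun x := Quot.mk _ ⟨d, x⟩
  continuous_toFun := continuous_quot_mk.comp continuous_sigmaMk

theorem wedgeProj_eq_iff {x y : Fin (c d) × sph d} :
    wedgeProj c d x = wedgeProj c d y ↔ x = y ∨ x.2 = basePt d ∧ y.2 = basePt d := by
  have hequiv : Equivalence fun x y : Σ e, Fin (c e) × sph e =>
      x = y ∨ x.2.2 = basePt x.1 ∧ y.2.2 = basePt y.1 :=
    { refl x := .inl rfl
      symm h := h.imp Eq.symm And.symm
      trans := by
        rintro x y z (rfl | hxy) (rfl | hyz)
        exacts [.inl rfl, .inr hyz, .inr hxy, .inr ⟨hxy.1, hyz.2⟩] }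
  exact (hequiv.quot_mk_eq_iff ⟨d, x⟩ ⟨d, y⟩).trans (by simp)

theorem isQuotientMap_wedgeProj (hc : ∀ e ≠ d, c e = 0) : IsQuotientMap (wedgeProj c d) := by
  have hsurj : Function.Surjective
      (Sigma.mk (β := fun e => Fin (c e) × sph e) d) := by
    rintro ⟨e, j, x⟩
    obtain rfl | he := eq_or_ne e d
    · exact ⟨(j, x), rfl⟩
    · exact ((hc e he ▸ j : Fin 0)).elim0
  exact isQuotientMap_quot_mk.comp (isOpenMap_sigmaMk.isQuotientMap continuous_sigmaMk hsurj)

theorem inner_basePt (x : sph d) : inner ℝ (basePt d).1 x.1 = x.1 0 :=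
  (EuclideanSpace.inner_single_left 0 1 x.1).trans (by simp)

theorem homotopyEquiv_sphereWedge_of_glued_hemispheres {X : Type*} [TopologicalSpace X] [T2Space X]
    (hc : ∀ e ≠ d, c e = 0) (p : C(Fin (c d) × sph d, X)) (hsurj : Function.Surjective p)
    (hp : ∀ j l x y, p (j, x) = p (l, y) ↔ x = y ∧ (j = l ∨ 0 ≤ x.1 0)) :
    Nonempty (ContinuousMap.HomotopyEquiv X (sphereWedge c)) := by
  simp only [← inner_basePt] at hp
  let H : C((Fin (c d) × sph d) × I, Fin (c d) × sph d) :=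
    ⟨fun a => (a.1.1, hemisphereContraction (basePt d) (a.1.2, a.2)), by fun_prop⟩
  refine homotopyEquiv_of_isQuotientMap (c := H) (.of_surjective_continuous hsurj p.continuous)
    (isQuotientMap_wedgeProj hc) ?_ ?_ ?_ ?_ ?_
  · rintro ⟨j, x⟩
    simp [H, hemisphereContraction_zero]
  · intro a b hab
    obtain rfl | ⟨ha, hb⟩ := wedgeProj_eq_iff.1 hab
    · rfl
    · exact (hp _ _ _ _).2 ⟨ha.trans hb.symm, .inr (ha ▸ real_inner_self_nonneg)⟩
  · rintro ⟨j, x⟩ ⟨l, y⟩ t hab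
    obtain ⟨rfl, hj⟩ := (hp j l x y).1 hab
    exact (hp _ _ _ _).2 ⟨rfl, hj.imp_right fun hx => inner_hemisphereContraction_nonneg hx t⟩
  · intro a b t hab
    obtain rfl | h := wedgeProj_eq_iff.1 hab
    · rfl
    · exact wedgeProj_eq_iff.2 (.inr (by simp [H, h, hemisphereContraction_pole]))
  · rintro ⟨j, x⟩ ⟨l, y⟩ hab
    obtain ⟨rfl, rfl | hx⟩ := (hp j l x y).1 hab
    · rfl
    · exact wedgeProj_eq_iff.2 (.inr (by simp [H, hemisphereContraction_one hx]))

end Wedge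

section JoinPoints

variable {n d : ℕ}

/-- The embedding of the vertices of the cross-polytope with `d + 1` axes whose image spans the
suspension of the cross-polytope with `d` axes with suspension points `none` and `some j`. -/
def suspensionEmbedding (j : Fin n) : Fin (d + 1) × Bool ↪ Option (Fin n) ⊕ Fin d × Bool where
  toFun q := Fin.cases (.inl (if q.2 then none else some j)) (fun i => .inr (i, q.2)) q.1
  inj' := by
    rintro ⟨i, b⟩ ⟨i', b'⟩ h
    cases i using Fin.cases <;> cases i' using Fin.cases <;> cases b <;> cases b' <;> simp_all

@[simp]
theorem suspensionEmbedding_zero_true (j : Fin n) :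
    suspensionEmbedding j (0, true) = (.inl none : Option (Fin n) ⊕ Fin d × Bool) := rfl

@[simp]
theorem suspensionEmbedding_zero_false (j : Fin n) :
    suspensionEmbedding j (0, false) = (.inl (some j) : Option (Fin n) ⊕ Fin d × Bool) := rfl

@[simp]
theorem suspensionEmbedding_succ (j : Fin n) (i : Fin d) (b : Bool) :
    suspensionEmbedding j (i.succ, b) = .inr (i, b) := rfl

theorem mem_range_suspensionEmbedding {j : Fin n} {v : Option (Fin n) ⊕ Fin d × Bool} :
    v ∈ Set.range (suspensionEmbedding j) ↔ ∀ l, v = .inl (some l) → l = j := by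
  simp only [Set.mem_range, Prod.exists, Fin.exists_fin_succ, Bool.exists_bool,
    suspensionEmbedding_zero_true, suspensionEmbedding_zero_false, suspensionEmbedding_succ]
  rcases v with (_ | l) | ⟨i, _ | _⟩ <;> simp [eq_comm]

theorem faces_map_suspensionEmbedding (j : Fin n) (τ : Finset (Fin (d + 1) × Bool)) :
    (crossPolytope (Fin (d + 1))).faces τ ↔
      ((points (Option (Fin n))).join (crossPolytope (Fin d))).faces
        (τ.map (suspensionEmbedding j)) := by
  have hnone : .inl none ∈ τ.map (suspensionEmbedding j) ↔ (0, true) ∈ τ :=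
    Finset.mem_map' (suspensionEmbedding j) (a := (0, true))
  have hsome (l : Fin n) :
      .inl (some l) ∈ τ.map (suspensionEmbedding j) ↔ l = j ∧ (0, false) ∈ τ := by
    simp [Fin.exists_fin_succ, eq_comm, and_comm]
  have hinr (p : Fin d × Bool) :
      .inr p ∈ τ.map (suspensionEmbedding j) ↔ (p.1.succ, p.2) ∈ τ :=
    Finset.mem_map' (suspensionEmbedding j) (a := (p.1.succ, p.2))
  simp only [faces_join, points, crossPolytope, Fin.forall_fin_succ, Option.forall,
    Finset.mem_toLeft, Finset.mem_toRight, hnone, hsome, hinr]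
  grind

/-- The inclusion of the suspension of the cross-polytope with `d` axes with suspension points
`none` and `some j`. -/
noncomputable def suspensionMap (j : Fin n) : C((crossPolytope (Fin (d + 1))).space,
    ((points (Option (Fin n))).join (crossPolytope (Fin d))).space) :=
  extendMap (suspensionEmbedding j) fun τ => (faces_map_suspensionEmbedding j τ).1

theorem coord_suspensionMap_some (j l : Fin n) (f : (crossPolytope (Fin (d + 1))).space) :
    (suspensionMap j f).coord (.inl (some l)) = if l = j then f.coord (0, false) else 0 := by
  split_ifs with h
  · subst h
    exact coord_extendMap (suspensionEmbedding l) _ f (0, false)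
  · exact coord_extendMap_of_notMem_range _ f 
      (by simpa only [mem_range_suspensionEmbedding, Sum.inl.injEq, Option.some.injEq,
        forall_eq'] using h)

theorem suspensionMap_eq_iff {j l : Fin n} {f g : (crossPolytope (Fin (d + 1))).space} :
    suspensionMap j f = suspensionMap l g ↔ f = g ∧ (j = l ∨ f.coord (0, false) = 0) := by
  have hnone (j : Fin n) (f : (crossPolytope (Fin (d + 1))).space) :
      (suspensionMap j f).coord (.inl none) = f.coord (0, true) :=
    coord_extendMap (suspensionEmbedding j) _ f (0, true)
  have hinr (j : Fin n) (f : (crossPolytope (Fin (d + 1))).space) (p : Fin d × Bool) :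
      (suspensionMap j f).coord (.inr p) = f.coord (p.1.succ, p.2) :=
    coord_extendMap (suspensionEmbedding j) _ f (p.1.succ, p.2)
  have hsome (a b : ℝ) : (∀ m, (if m = j then a else 0) = if m = l then b else 0) ↔
      a = b ∧ (j = l ∨ a = 0) := by
    refine ⟨fun h => ?_, by grind⟩
    have hj := h j
    have hl := h l
    grind
  simp only [space.ext_iff, Sum.forall, Option.forall, Prod.forall, Fin.forall_fin_succ,
    Bool.forall_bool, hnone, hinr, coord_suspensionMap_some,
    hsome]
  tauto

theorem exists_suspensionMap [NeZero n]
    (x : ((points (Option (Fin n))).join (crossPolytope (Fin d))).space) :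
    ∃ j f, suspensionMap j f = x := by
  obtain ⟨j, hj⟩ : ∃ j : Fin n, ∀ l, Sum.inl (some l) ∈ x.support → l = j := by
    by_cases h : ∃ j : Fin n, Sum.inl (some j) ∈ x.support
    · obtain ⟨j, hj⟩ := h
      exact ⟨j, fun l hl => Option.some_injective _ <|
        x.faces_support.1 _ (Finset.mem_toLeft.2 hl) _ (Finset.mem_toLeft.2 hj)⟩
    · exact ⟨0, fun l hl => absurd ⟨l, hl⟩ h⟩
  exact ⟨j, _, extendMap_codRestrictMap (faces_map_suspensionEmbedding j) (.const Unit x)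
    (fun _ v hv => mem_range_suspensionEmbedding.2 fun l hl => hj l (hl ▸ hv)) ()⟩

theorem homotopyEquiv_points_join_crossPolytope [NeZero n] {c : ℕ → ℕ} (hn : c d = n)
    (hc : ∀ e ≠ d, c e = 0) :
    Nonempty (ContinuousMap.HomotopyEquiv
      ((points (Option (Fin n))).join (crossPolytope (Fin d))).space (sphereWedge c)) := by
  subst hn
  have : T2Space ((points (Option (Fin (c d)))).join (crossPolytope (Fin d))).space :=
    inferInstanceAs (T2Space (Subtype _))
  let h := crossPolytopeHomeoSphere (Fin (d + 1))
  refine homotopyEquiv_sphereWedge_of_glued_hemispheres hc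
    ⟨fun x => suspensionMap x.1 (h.symm x.2), ?_⟩ ?_ ?_
  · exact continuous_prod_of_discrete_left.2 fun j =>
      (suspensionMap j).continuous.comp h.symm.continuous
  · intro x
    obtain ⟨j, f, rfl⟩ := exists_suspensionMap x
    exact ⟨(j, h f), by simp⟩
  · intro j l x y
    have hx := nonneg_crossPolytopeHomeoSphere_iff (h.symm x) 0
    rw [h.apply_symm_apply] at hx
    simp [suspensionMap_eq_iff, hx]

end JoinPoints

end Cplx

/-- Theorem 5.12 (Taylan): `D(C_{4k})` is homotopy equivalent to a wedge of three
copies of `S^{2k-1}`, and `D(C_{4k+i})` is homotopy equivalent to `S^{2k-2+i}` for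
`i = 1, 2, 3`. -/
theorem dominance_cycle_homotopyEquiv (k : ℕ) (hk : 1 ≤ k) :
    Nonempty (ContinuousMap.HomotopyEquiv (domCpx (cycleGraph (4 * k))).space
      (sphereWedge fun d => if d = 2 * k - 1 then 3 else 0)) ∧
    ∀ i : ℕ, 1 ≤ i → i ≤ 3 → 3 ≤ 4 * k + i →
      Nonempty (ContinuousMap.HomotopyEquiv (domCpx (cycleGraph (4 * k + i))).space
        (Metric.sphere (0 : EuclideanSpace ℝ (Fin (2 * k - 1 + i))) 1)) := by
  constructor
  · obtain ⟨l, rfl⟩ := Nat.exists_eq_add_of_le' hk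
    rw [show 4 * (l + 1) = 4 * l + 4 by ring, show 2 * (l + 1) - 1 = 1 + 2 * l by omega]
    obtain ⟨e⟩ := (Cplx.joinEquiv_cycle_points l).homotopyEquiv
    obtain ⟨e'⟩ := Cplx.homotopyEquiv_points_join_crossPolytope (d := 1 + 2 * l) (n := 3)
      (c := fun d => if d = 1 + 2 * l then 3 else 0) (if_pos rfl) fun _ he => if_neg he
    exact ⟨e.trans e'⟩
  · intro i hi hi' _
    obtain ⟨j, rfl⟩ := Nat.exists_eq_add_of_le' hi
    rw [show 2 * k - 1 + (j + 1) = j + 2 * k by omega]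
    obtain ⟨e⟩ := (Cplx.joinEquiv_cycle_crossPolytope (Nat.le_of_succ_le_succ hi') k).homotopyEquiv
    exact ⟨e.trans (Cplx.crossPolytopeHomeoSphere (Fin (j + 2 * k))).toHomotopyEquiv⟩
end
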